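/- The critical value function τ is continuous at every point of (1,∞) ∖ {β_r^S : S ∈ Λ_e}, while for each S ∈ Λ_e it has an upward jump at β_r^S: lim_{β↘β_r^S} τ(β) = (S^∞)_{β_r^S} > (S 0^∞)_{β_r^S} = τ(β_r^S). -/

import Mathlib

open Set Filter MeasureTheory Topology

noncomputable section

/-- The β-transformation `x ↦ βx - ⌊βx⌋`. -/
def Tbeta (β x : ℝ) : ℝ := Int.fract (β * x)

/-- The survivor set `K_β(t)`: points of `[0,1)` whose orbit never enters `[0,t)`. -/
def survivor (β t : ℝ) : Set ℝ :=
  {x | x ∈ Set.Ico (0 : ℝ) 1 ∧ ∀ n : ℕ, t ≤ (Tbeta β)^[n] x}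

/-- The set-valued bifurcation set `E_β`. -/
def Ebif (β : ℝ) : Set ℝ :=
  {t | t ∈ Set.Ico (0 : ℝ) 1 ∧ ∀ t' : ℝ, t < t' → survivor β t' ≠ survivor β t}

/-- `(c)_β = Σ_{i≥1} c_i β^{-i}` for an infinite digit sequence (indexed from `0`). -/
def valSeq (β : ℝ) (c : ℕ → ℕ) : ℝ := ∑' i : ℕ, (c i : ℝ) / β ^ (i + 1)

/-- `(w 0^∞)_β` for a finite word `w`. -/
def valWord (β : ℝ) (w : List ℕ) : ℝ :=
  ∑ i ∈ Finset.range w.length, (w.getD i 0 : ℝ) / β ^ (i + 1)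

/-- `w⁺`: increment the last letter of `w`. -/
def wplus (w : List ℕ) : List ℕ := w.dropLast ++ [w.getLast! + 1]

/-- `w⁻`: decrement the last letter of `w`. -/
def wminus (w : List ℕ) : List ℕ := w.dropLast ++ [w.getLast! - 1]

/-- `θ`: increment every digit of `w` by one. -/
def theta (w : List ℕ) : List ℕ := w.map (· + 1)

/-- `L(w)`: the lexicographically largest cyclic permutation of `w`. -/
def maxCyc (w : List ℕ) : List ℕ := ((List.range w.length).map w.rotate).foldl max []

/-- `w^∞`: the periodic sequence with period block `w`. -/
def perSeq (w : List ℕ) : ℕ → ℕ := fun i => w.getD (i % w.length) 0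

/-- The sequence given by the word `w` followed by the sequence `c`. -/
def wordSeq (w : List ℕ) (c : ℕ → ℕ) : ℕ → ℕ :=
  fun i => if i < w.length then w.getD i 0 else c (i - w.length)

/-- Strict lexicographic order `≺` on sequences. -/
def seqLt (x y : ℕ → ℕ) : Prop := ∃ n, (∀ i < n, x i = y i) ∧ x n < y n

/-- Lexicographic order `≼` on sequences. -/
def seqLe (x y : ℕ → ℕ) : Prop := x = y ∨ seqLt x y

/-- The `n`-fold left shift `σⁿ` on sequences. -/
def shiftn (n : ℕ) (x : ℕ → ℕ) : ℕ → ℕ := fun i => x (i + n)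

/-- One step of the Farey recursion: insert the concatenation `w_i w_{i+1}`
between consecutive entries. -/
def fareyInsert : List (List ℕ) → List (List ℕ)
  | [] => []
  | [w] => [w]
  | w :: v :: rest => w :: (w ++ v) :: fareyInsert (v :: rest)

/-- The ordered set `F_n` of Farey words of level `n`. -/
def fareyLevel : ℕ → List (List ℕ)
  | 0 => [[0], [1]]
  | n + 1 => fareyInsert (fareyLevel n)

/-- `F`: all Farey words of length at least two. -/
def FareySet : Set (List ℕ) := {w | (∃ n, w ∈ fareyLevel n) ∧ w ≠ [0] ∧ w ≠ [1]}

/-- `F̂ = F ∪ {1}`. -/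
def FareyHat : Set (List ℕ) := FareySet ∪ {[1]}

/-- The extended Farey set `F_e = {θ^k(w) : w ∈ F̂, k ≥ 0}`. -/
def FareyExt : Set (List ℕ) := {w | ∃ v ∈ FareyHat, ∃ k : ℕ, w = theta^[k] v}

/-- A nonempty word is Lyndon iff it is strictly smaller than each of its nontrivial
cyclic rotations (equivalently: aperiodic and lexicographically smallest among its
cyclic permutations). -/
def IsLyndon (w : List ℕ) : Prop := w ≠ [] ∧ ∀ i, 0 < i → i < w.length → w < w.rotate i

/-- `L_e`: all Lyndon words over `ℕ ∪ {0}` except the single-letter word `0`. -/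
def LyndonExt : Set (List ℕ) := {w | IsLyndon w ∧ w ≠ [0]}

/-- `L`: Lyndon words over `{0,1}` of length at least `2`. -/
def LyndonBin : Set (List ℕ) := {w | IsLyndon w ∧ 2 ≤ w.length ∧ ∀ d ∈ w, d ≤ 1}

/-- The block of `Φ_s` emitted for current digit `d` after previous digit `p`:
`L(s)` for `00`, `s⁻` for `10`, `L(s)⁺` for `01`, `s` for `11`. -/
def phiBlock (s : List ℕ) (p d : ℕ) : List ℕ :=
  if d = 0 then (if p = 0 then maxCyc s else wminus s)
  else (if p = 0 then wplus (maxCyc s) else s)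

def phiAux (s : List ℕ) : ℕ → List ℕ → List ℕ
  | _, [] => []
  | p, d :: rest => phiBlock s p d ++ phiAux s d rest

/-- The substitution `Φ_s` on finite words; `s • r = subst s r`.  An initial digit `0`
produces `s⁻`, an initial digit `1` produces `L(s)⁺`, and thereafter runs
`0^k` resp. `1^l` produce `L(s)^{k-1}` resp. `s^{l-1}`, in accordance with
`Φ_s(0^{k₁}1^{l₁}…) = s⁻ L(s)^{k₁-1} L(s)⁺ s^{l₁-1} …` and
`Φ_s(1^{k₁}0^{l₁}…) = L(s)⁺ s^{k₁-1} s⁻ L(s)^{l₁-1} …`. -/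
def subst (s r : List ℕ) : List ℕ :=
  match r with
  | [] => []
  | d :: rest => phiBlock s (1 - d) d ++ phiAux s d rest

/-- The substitution `Φ_s` on infinite sequences, as the limit of its values
on initial segments (each digit contributes a nonempty block, so the `i`-th letter
is determined by the first `i+1` digits). -/
def phiSeq (s : List ℕ) (c : ℕ → ℕ) : ℕ → ℕ :=
  fun i => (subst s (List.ofFn fun j : Fin (i + 1) => c j)).getD i 0

/-- `Λ_e(m) = {s₁ • s₂ • … • s_m : s₁ ∈ F_e, s₂,…,s_m ∈ F}`. -/
def LambdaE (m : ℕ) : Set (List ℕ) :=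
  {w | ∃ s₁ ∈ FareyExt, ∃ rs : List (List ℕ),
    rs.length = m - 1 ∧ (∀ r ∈ rs, r ∈ FareySet) ∧ w = rs.foldl subst s₁}

/-- `Λ_e = ∪_{m≥1} Λ_e(m)`. -/
def LambdaExt : Set (List ℕ) := ⋃ m ∈ Set.Ici 1, LambdaE m

/-- `β_ℓ^S`: the base `β > 1` with `(L(S)^∞)_β = 1` (it is unique since
`β ↦ (c)_β` is strictly decreasing). -/
def betaL (S : List ℕ) : ℝ :=
  Classical.epsilon fun β : ℝ => 1 < β ∧ valSeq β (perSeq (maxCyc S)) = 1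

/-- `β_*^S`: the base `β > 1` with `(L(S)⁺ S⁻ L(S)^∞)_β = 1`. -/
def betaStar (S : List ℕ) : ℝ :=
  Classical.epsilon fun β : ℝ =>
    1 < β ∧ valSeq β (wordSeq (wplus (maxCyc S) ++ wminus S) (perSeq (maxCyc S))) = 1

/-- `β_r^S`: the base `β > 1` with `(L(S)⁺ S^∞)_β = 1`. -/
def betaR (S : List ℕ) : ℝ :=
  Classical.epsilon fun β : ℝ => 1 < β ∧ valSeq β (wordSeq (wplus (maxCyc S)) (perSeq S)) = 1

/-- The Lyndon/Farey interval `J^S = [β_ℓ^S, β_r^S]`. -/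
def Jint (S : List ℕ) : Set ℝ := Set.Icc (betaL S) (betaR S)

/-- The basic interval `I^S = [β_ℓ^S, β_*^S]`. -/
def Iint (S : List ℕ) : Set ℝ := Set.Icc (betaL S) (betaStar S)

/-- The exceptional set `E = (1,∞) ∖ ∪_{s ∈ F_e} J^s`. -/
def Eexc : Set ℝ := Set.Ioi 1 \ ⋃ s ∈ FareyExt, Jint s

/-- The relative exceptional set `E^S = (J^S ∖ I^S) ∖ ∪_{r ∈ F} J^{S•r}`. -/
def EexcRel (S : List ℕ) : Set ℝ :=
  (Jint S \ Iint S) \ ⋃ r ∈ FareySet, Jint (subst S r)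

/-- The infinitely renormalizable set `E_∞ = ∩_{m≥1} ∪_{S ∈ Λ_e(m)} J^S`. -/
def Einf : Set ℝ := ⋂ m ∈ Set.Ici 1, ⋃ S ∈ LambdaE m, Jint S

/-- `E_L = E ∪ {β_ℓ^s : s ∈ F_e}`. -/
def EL : Set ℝ := Eexc ∪ {x | ∃ s ∈ FareyExt, x = betaL s}

/-- The critical value `τ(β) = min{t > 0 : dim_H K_β(t) = 0}`. -/
def tau (β : ℝ) : ℝ := sInf {t : ℝ | 0 < t ∧ dimH (survivor β t) = 0}

end

/-!
The sequences that matter are built from binary sequences by the substitutions `A` (`0 ↦ 0`,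
`1 ↦ 10`), `B` (`0 ↦ 01`, `1 ↦ 1`) and `M` (`0 ↦ 01`, `1 ↦ 10`), followed by an outer coding into
digits. A node of the resulting tree is an outer coding `o` with a list `l` of substitutions; it
carries the codes of `0 1^∞`, `0 1 0^∞`, `1 0^∞` and `1 0 1^∞`. If the code of `0 1^∞` has value
less than `1` in base `β`, the coded points form a separated binary tree of survivors, so `τ(β)` is
at least the value of the code of `1 0^∞`. If it has value at least `1`, every survivor above the
code of `1 0 1^∞` can be desubstituted along `l`, so there are only countably many of them and
`τ(β)` is at most that value. Padding `l` with powers of `A` or `B` gives the limiting versions of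
both bounds.

When `1` lies strictly between the values of the codes of `0 1 0^∞` and `0 1^∞`, it either lies
between those values at a child of the node, or falls into a gap between two children, where `τ` is
squeezed between continuous bounds, or is the value of the code of `0 1^∞` at an `M`-child. Infinite
descent also squeezes `τ`. The `M`-children, together with the roots that code differences,
correspond exactly to the words `S ∈ Λ_e`; there the code of `0 1^∞` is `L(S)⁺ S^∞`, and `τ`
jumps from the value of the code of `1 0 1^∞`, which is `(S 0^∞)_β`, to that of `1^∞`, which is
`(S^∞)_β`.
-/

namespace BetaTau

/-! ### Sequences over an alphabet -/

section Sequences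

variable {α : Type*}

/-- The `n`-fold left shift of a sequence over any alphabet; `shiftn` is the case `α = ℕ`. -/
def shift (n : ℕ) (x : ℕ → α) : ℕ → α := fun i => x (i + n)

/-- The sequence with first letter `a` followed by `x`. -/
def cons (a : α) (x : ℕ → α) : ℕ → α
  | 0 => a
  | i + 1 => x i

/-- `u` and `v` agree on the first `n` letters. -/
def AgreeUpTo (n : ℕ) (u v : ℕ → α) : Prop := ∀ i < n, u i = v i

variable {m n : ℕ} {u v : ℕ → α}

@[simp] lemma cons_zero (a : α) (x : ℕ → α) : cons a x 0 = a := rfl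

@[simp] lemma cons_succ (a : α) (x : ℕ → α) (i : ℕ) : cons a x (i + 1) = x i := rfl

@[simp] lemma shift_apply (n i : ℕ) (x : ℕ → α) : shift n x i = x (i + n) := rfl

@[simp] lemma shift_zero (x : ℕ → α) : shift 0 x = x := rfl

lemma shift_shift (m n : ℕ) (x : ℕ → α) : shift m (shift n x) = shift (m + n) x :=
  funext fun i => congrArg x (add_assoc i m n)

@[simp] lemma shift_one_cons (a : α) (x : ℕ → α) : shift 1 (cons a x) = x := rfl

@[simp] lemma shift_succ_cons (n : ℕ) (a : α) (x : ℕ → α) :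
    shift (n + 1) (cons a x) = shift n x := by
  rw [← shift_shift, shift_one_cons]

lemma cons_apply_shift (n : ℕ) (x : ℕ → α) : cons (x n) (shift (n + 1) x) = shift n x := by
  funext i
  cases i with
  | zero => simp
  | succ i => simp only [cons_succ, shift_apply, add_assoc, add_comm 1]

lemma cons_head (x : ℕ → α) : cons (x 0) (shift 1 x) = x := cons_apply_shift 0 x

lemma eq_cons_of_head {x : ℕ → α} {a : α} (h : x 0 = a) : x = cons a (shift 1 x) := by
  rw [← h, cons_head]

lemma agreeUpTo_zero (u v : ℕ → α) : AgreeUpTo 0 u v :=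
  fun _ hi => absurd hi (Nat.not_lt_zero _)

protected lemma AgreeUpTo.mono (h : AgreeUpTo n u v) (hmn : m ≤ n) : AgreeUpTo m u v :=
  fun i hi => h i (hi.trans_le hmn)

protected lemma AgreeUpTo.symm (h : AgreeUpTo n u v) : AgreeUpTo n v u :=
  fun i hi => (h i hi).symm

protected lemma AgreeUpTo.tail (h : AgreeUpTo (n + 1) u v) :
    AgreeUpTo n (shift 1 u) (shift 1 v) :=
  fun i hi => h (i + 1) (by lia)

lemma agreeUpTo_succ_iff :
    AgreeUpTo (n + 1) u v ↔ u 0 = v 0 ∧ AgreeUpTo n (shift 1 u) (shift 1 v) := by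
  refine ⟨fun h => ⟨h 0 n.succ_pos, h.tail⟩, fun ⟨h0, h⟩ i hi => ?_⟩
  cases i with
  | zero => exact h0
  | succ i => exact h i (by lia)

protected lemma AgreeUpTo.cons (a : α) (h : AgreeUpTo n u v) :
    AgreeUpTo (n + 1) (cons a u) (cons a v) :=
  agreeUpTo_succ_iff.mpr ⟨rfl, h⟩

lemma eq_of_agreeUpTo (h : ∀ n, AgreeUpTo n u v) : u = v :=
  funext fun i => h (i + 1) i i.lt_succ_self

lemma exists_agreeUpTo_apply_ne (h : u ≠ v) : ∃ n, AgreeUpTo n u v ∧ u n ≠ v n := by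
  classical
  have hne : ∃ n, u n ≠ v n := Function.ne_iff.mp h
  exact ⟨Nat.find hne, fun i hi => not_not.mp (Nat.find_min hne hi), Nat.find_spec hne⟩

end Sequences

/-! ### The lexicographic order on binary sequences, with an orientation -/

/-- The strict lexicographic order on binary sequences for `c = false`, and its opposite for
`c = true`. Carrying the orientation as a parameter lets one argument treat upper and lower
bounds at once. -/
def LexLt (c : Bool) (u v : ℕ → Bool) : Prop := ∃ n, AgreeUpTo n u v ∧ u n = c ∧ v n = !c

/-- The reflexive version of `LexLt`. -/
def LexLe (c : Bool) (u v : ℕ → Bool) : Prop := u = v ∨ LexLt c u v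

section LexOrder

variable {c d : Bool} {u v w : ℕ → Bool}

lemma lexLt_of_head (hu : u 0 = c) (hv : v 0 = !c) : LexLt c u v :=
  ⟨0, agreeUpTo_zero u v, hu, hv⟩

lemma lexLt_not_iff : LexLt (!c) u v ↔ LexLt c v u := by
  constructor <;> rintro ⟨n, h, hu, hv⟩ <;>
    exact ⟨n, h.symm, by simpa using hv, by simpa using hu⟩

lemma lexLt_iff_toLex_lt :
    LexLt c u v ↔ toLex (fun i => u i ^^ c) < toLex (fun i => v i ^^ c) := by
  refine exists_congr fun n => and_congr (forall₂_congr fun i _ => ?_) ?_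
  · exact Bool.xor_left_inj.symm
  · change _ ↔ (u n ^^ c) < (v n ^^ c)
    cases c <;> cases u n <;> cases v n <;> decide

protected lemma LexLt.trans (h : LexLt c u v) (h' : LexLt c v w) : LexLt c u w :=
  lexLt_iff_toLex_lt.mpr ((lexLt_iff_toLex_lt.mp h).trans (lexLt_iff_toLex_lt.mp h'))

protected lemma LexLt.asymm (h : LexLt c u v) : ¬ LexLt c v u :=
  fun h' => (lexLt_iff_toLex_lt.mp h).asymm (lexLt_iff_toLex_lt.mp h')

protected lemma LexLt.ne (h : LexLt c u v) : u ≠ v := fun e =>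
  h.asymm (e ▸ h)

lemma lexLt_trichotomy (c : Bool) (u v : ℕ → Bool) : LexLt c u v ∨ u = v ∨ LexLt c v u := by
  simp only [lexLt_iff_toLex_lt]
  refine (lt_trichotomy _ _).imp_right (Or.imp_left fun h => funext fun i => ?_)
  exact Bool.xor_left_inj.mp (congrFun (toLex_inj.mp h) i)

protected lemma LexLt.trans_le (h : LexLt c u v) (h' : LexLe c v w) : LexLt c u w := by
  rcases h' with rfl | h'
  · exact h
  · exact h.trans h'

lemma lexLe_of_not_lexLt (h : ¬ LexLt c v u) : LexLe c u v := by
  rcases lexLt_trichotomy c u v with h' | h' | h'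
  exacts [Or.inr h', Or.inl h', absurd h' h]

protected lemma LexLt.cons (d : Bool) (h : LexLt c u v) : LexLt c (cons d u) (cons d v) := by
  obtain ⟨n, hn, hu, hv⟩ := h
  exact ⟨n + 1, hn.cons d, hu, hv⟩

protected lemma LexLe.cons (d : Bool) (h : LexLe c u v) : LexLe c (cons d u) (cons d v) :=
  h.imp (congrArg (cons d)) (LexLt.cons d)

protected lemma LexLt.of_cons (h : LexLt c (cons d u) (cons d v)) : LexLt c u v := by
  rcases lexLt_trichotomy c u v with h' | rfl | h'
  exacts [h', absurd rfl h.ne, absurd h (h'.cons d).asymm]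

end LexOrder

/-! ### Binary substitutions -/

/-- The `i`-th letter of `expand g x`. -/
def expandAt (g : Bool → Bool) : ℕ → (ℕ → Bool) → Bool
  | 0, x => x 0
  | 1, x => if g (x 0) then !(x 0) else x 1
  | i + 2, x => if g (x 0) then expandAt g i (shift 1 x) else expandAt g (i + 1) (shift 1 x)

/-- The substitution on binary sequences which replaces every letter `c` by the word `c, !c` if
`g c = true` and keeps it otherwise. -/
def expand (g : Bool → Bool) (x : ℕ → Bool) : ℕ → Bool := fun i => expandAt g i x

section Expand

variable {g : Bool → Bool} {c : Bool} {n : ℕ} {u v : ℕ → Bool}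

@[simp] lemma expand_apply_zero (g : Bool → Bool) (x : ℕ → Bool) : expand g x 0 = x 0 := rfl

lemma expand_cons_of_true (h : g c = true) (x : ℕ → Bool) :
    expand g (cons c x) = cons c (cons (!c) (expand g x)) := by
  funext i
  match i with
  | 0 => rfl
  | 1 | i + 2 => simp [expand, expandAt, h]

lemma expand_cons_of_false (h : g c = false) (x : ℕ → Bool) :
    expand g (cons c x) = cons c (expand g x) := by
  funext i
  match i with
  | 0 => rfl
  | 1 | i + 2 => simp [expand, expandAt, h]

protected lemma LexLt.expand (g : Bool → Bool) (h : LexLt c u v) :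
    LexLt c (expand g u) (expand g v) := by
  obtain ⟨n, hn, hu, hv⟩ := h
  induction n generalizing u v with
  | zero => exact lexLt_of_head hu hv
  | succ n ih =>
    have tails : LexLt c (expand g (shift 1 u)) (expand g (shift 1 v)) := ih hn.tail hu hv
    rw [← cons_head u, ← cons_head v, ← hn 0 n.succ_pos]
    cases hg : g (u 0)
    · simpa only [expand_cons_of_false hg] using tails.cons _
    · simpa only [expand_cons_of_true hg] using (tails.cons _).cons _

protected lemma LexLe.expand (g : Bool → Bool) (h : LexLe c u v) :
    LexLe c (expand g u) (expand g v) :=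
  h.imp (congrArg (expand g)) (LexLt.expand g)

protected lemma LexLt.of_expand (h : LexLt c (expand g u) (expand g v)) : LexLt c u v := by
  rcases lexLt_trichotomy c u v with h' | rfl | h'
  exacts [h', absurd rfl h.ne, absurd h (h'.expand g).asymm]

protected lemma AgreeUpTo.expand (g : Bool → Bool) (h : AgreeUpTo n u v) :
    AgreeUpTo n (expand g u) (expand g v) := by
  induction n generalizing u v with
  | zero => exact agreeUpTo_zero _ _
  | succ n ih =>
    have tails := ih h.tail
    rw [← cons_head u, ← cons_head v, ← h 0 n.succ_pos]
    cases hg : g (u 0)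
    · simpa only [expand_cons_of_false hg] using tails.cons _
    · simpa only [expand_cons_of_true hg] using ((tails.cons _).cons _).mono (by lia)

protected lemma AgreeUpTo.expand_of_head (h : AgreeUpTo (n + 1) u v) (hg : g (u 0) = true) :
    AgreeUpTo (n + 2) (expand g u) (expand g v) := by
  have tails := h.tail.expand g
  rw [← cons_head u, ← cons_head v, ← h 0 n.succ_pos, expand_cons_of_true hg,
    expand_cons_of_true hg]
  exact (tails.cons _).cons _

lemma AgreeUpTo.expand_succ (hg : ∃ c, g c = true) (h : AgreeUpTo (n + 2) u v)
    (hu : u 1 = !u 0) : AgreeUpTo (n + 3) (expand g u) (expand g v) := by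
  cases hg0 : g (u 0)
  · have hg1 : g (u 1) = true := by
      obtain ⟨c, hc⟩ := hg
      have hc0 : c = !u 0 := Bool.eq_not_of_ne fun e => by rw [e, hg0] at hc; cases hc
      rw [hu, ← hc0, hc]
    have tails := h.tail.expand_of_head hg1
    rw [← cons_head u, ← cons_head v, ← h 0 (by lia), expand_cons_of_false hg0,
      expand_cons_of_false hg0]
    exact tails.cons _
  · exact h.expand_of_head hg0

lemma expand_apply_one (hu : u 1 = !u 0) : expand g u 1 = !(expand g u 0) := by
  simp only [expand, expandAt, hu, ite_self]

protected lemma AgreeUpTo.of_expand (h : AgreeUpTo (2 * n) (expand g u) (expand g v)) :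
    AgreeUpTo n u v := by
  induction n generalizing u v with
  | zero => exact agreeUpTo_zero _ _
  | succ n ih =>
    have h0 : u 0 = v 0 := h 0 (by lia)
    refine agreeUpTo_succ_iff.mpr ⟨h0, ih ?_⟩
    rw [← cons_head u, ← cons_head v, ← h0] at h
    cases hg : g (u 0)
    · rw [expand_cons_of_false hg, expand_cons_of_false hg] at h
      exact (AgreeUpTo.tail (n := 2 * n + 1) h).mono (by lia)
    · rw [expand_cons_of_true hg, expand_cons_of_true hg] at h
      exact AgreeUpTo.tail (AgreeUpTo.tail (n := 2 * n + 1) h)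

lemma exists_shift_expand (g : Bool → Bool) (x : ℕ → Bool) (n : ℕ) :
    ∃ m, shift n (expand g x) = expand g (shift m x) ∨
      (g (x m) = true ∧ shift n (expand g x) = cons (!x m) (expand g (shift (m + 1) x))) := by
  induction n with
  | zero => exact ⟨0, Or.inl rfl⟩
  | succ n ih =>
    obtain ⟨m, h | ⟨-, h⟩⟩ := ih
    · have e : shift (n + 1) (expand g x) = shift 1 (expand g (cons (x m) (shift (m + 1) x))) := by
        rw [cons_apply_shift, ← h, shift_shift, add_comm]
      cases hg : g (x m)
      · exact ⟨m + 1, Or.inl (by rw [e, expand_cons_of_false hg, shift_one_cons])⟩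
      · exact ⟨m, Or.inr ⟨hg, by rw [e, expand_cons_of_true hg, shift_one_cons]⟩⟩
    · exact ⟨m + 1, Or.inl (by rw [add_comm, ← shift_shift, h, shift_one_cons])⟩

end Expand

/-- Every shift of `x` lies between the tails of `K true` (below) and `K false` (above). -/
def TailsBetween (K : Bool → ℕ → Bool) (x : ℕ → Bool) : Prop :=
  ∀ n c, LexLe c (shift n x) (shift 1 (K c))

/-- `K c` starts with `c, !c` for both letters `c`. -/
def Framed (K : Bool → ℕ → Bool) : Prop := ∀ c, K c 0 = c ∧ K c 1 = !c

section Framed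

variable {K : Bool → ℕ → Bool} {x : ℕ → Bool}

protected lemma Framed.expand (hK : Framed K) (g : Bool → Bool) :
    Framed fun c => expand g (K c) := fun c => by
  obtain ⟨h0, h1⟩ := hK c
  have h : expand g (K c) 1 = !(expand g (K c) 0) :=
    expand_apply_one (h1.trans (congrArg not h0.symm))
  exact ⟨h0, h.trans (congrArg not h0)⟩

protected lemma TailsBetween.expand (hK : Framed K) (g : Bool → Bool) (hx : TailsBetween K x) :
    TailsBetween (fun c => expand g (K c)) (expand g x) := by
  intro n c
  obtain ⟨h0, h1⟩ := hK c
  change LexLe c _ (shift 1 (expand g (K c)))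
  obtain ⟨m, h | ⟨hgm, h⟩⟩ := exists_shift_expand g x n <;>
    rw [h, eq_cons_of_head h0] <;> cases hg : g c
  · rw [expand_cons_of_false hg]
    exact (hx m c).expand g
  · rw [expand_cons_of_true hg, shift_one_cons]
    by_cases hm : x m = c
    · exact Or.inr (lexLt_of_head (by simpa using hm) rfl)
    · rw [← cons_apply_shift m x, Bool.eq_not_of_ne hm]
      cases hg' : g (!c)
      · rw [expand_cons_of_false hg']
        exact ((hx (m + 1) c).expand g).cons _
      · rw [expand_cons_of_true hg']
        exact Or.inr ((lexLt_of_head (by simp) h1).cons _)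
  · have hm : x m = !c := Bool.eq_not_of_ne fun e => by rw [e, hg] at hgm; cases hgm
    rw [expand_cons_of_false hg, hm]
    exact Or.inr (lexLt_of_head (by simp) h1)
  · rw [expand_cons_of_true hg, shift_one_cons]
    by_cases hm : x m = c
    · rw [hm]
      exact ((hx (m + 1) c).expand g).cons _
    · rw [Bool.eq_not_of_ne hm]
      exact Or.inr (lexLt_of_head (by simp) rfl)

end Framed
/-! ### The order on digit sequences -/

lemma seqLt_iff_toLex_lt {x y : ℕ → ℕ} : seqLt x y ↔ toLex x < toLex y := Iff.rfl

lemma seqLe_iff_toLex_le {x y : ℕ → ℕ} : seqLe x y ↔ toLex x ≤ toLex y := by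
  rw [le_iff_eq_or_lt, toLex_inj]
  rfl

lemma seqLe_trans {x y z : ℕ → ℕ} (h : seqLe x y) (h' : seqLe y z) : seqLe x z := by
  rw [seqLe_iff_toLex_le] at *
  exact h.trans h'

/-! ### Outer codings -/

/-- The outer codings of binary sequences as digit sequences. They account for the first
substitution `s₁ ∈ F_e`: `raise k` forgets the first letter and adds `k` to all others, `diff k`
adds `k + 1` to the consecutive differences. -/
inductive OuterCoding
  | raise (k : ℕ)
  | diff (k : ℕ)

namespace OuterCoding

/-- The digit emitted at letter `c` after letter `p`. -/
def digit : OuterCoding → Bool → Bool → ℕ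
  | raise k, _, c => k + c.toNat
  | diff k, p, c => k + c.toNat + (!p).toNat

/-- The digit sequence of a binary sequence. -/
def encode (o : OuterCoding) (x : ℕ → Bool) : ℕ → ℕ := fun i => o.digit (x i) (x (i + 1))

/-- The largest digit of an outer coding. -/
def maxDigit (o : OuterCoding) : ℕ := o.digit false true

variable (o : OuterCoding)

lemma digit_le_maxDigit (p c : Bool) : o.digit p c ≤ o.maxDigit := by
  cases o <;> cases p <;> cases c <;> simp [digit, maxDigit, add_assoc]

lemma digit_true (p : Bool) : o.digit p true = o.digit p false + 1 := by
  cases o <;> cases p <;> simp [digit]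

lemma digit_right_injective (p : Bool) : Function.Injective (o.digit p) := by
  intro c c' h
  cases c <;> cases c' <;> simp_all [digit_true]

lemma shift_encode (n : ℕ) (x : ℕ → Bool) : shift n (o.encode x) = o.encode (shift n x) := by
  funext i
  simp only [encode, shift_apply, add_right_comm]

lemma encode_cons_true_le (x : ℕ → Bool) :
    seqLe (o.encode (cons true x)) (o.encode (cons false x)) := by
  cases o with
  | raise k => exact Or.inl (funext fun i => by cases i <;> rfl)
  | diff k => exact Or.inr ⟨0, fun i hi => absurd hi i.not_lt_zero, by simp [encode, digit]⟩

end OuterCoding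

section Encode

variable {o : OuterCoding} {n : ℕ} {u v : ℕ → Bool}

protected lemma AgreeUpTo.encode (o : OuterCoding) (h : AgreeUpTo (n + 1) u v) :
    AgreeUpTo n (o.encode u) (o.encode v) := fun i hi =>
  congrArg₂ o.digit (h i (by lia)) (h (i + 1) (by lia))

protected lemma AgreeUpTo.of_encode (h0 : u 0 = v 0) (h : AgreeUpTo n (o.encode u) (o.encode v)) :
    AgreeUpTo (n + 1) u v := by
  intro i hi
  induction i with
  | zero => exact h0
  | succ i ih =>
    have digits : o.digit (u i) (u (i + 1)) = o.digit (v i) (v (i + 1)) := h i (by lia)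
    rw [ih (by lia)] at digits
    exact o.digit_right_injective _ digits

protected lemma LexLt.encode (o : OuterCoding) (h0 : u 0 = v 0) (h : LexLt false u v) :
    seqLt (o.encode u) (o.encode v) := by
  obtain ⟨n, hn, hu, hv⟩ := h
  cases n with
  | zero => rw [hu, hv] at h0; cases h0
  | succ n =>
    refine ⟨n, hn.encode o, ?_⟩
    simp only [OuterCoding.encode, hu, hv, hn n n.lt_succ_self, Bool.not_false, o.digit_true]
    exact Nat.lt_succ_self _

protected lemma LexLe.encode (o : OuterCoding) (h0 : u 0 = v 0) (h : LexLe false u v) :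
    seqLe (o.encode u) (o.encode v) :=
  h.imp (congrArg o.encode) (LexLt.encode o h0)

lemma lexLe_not_iff {c : Bool} : LexLe (!c) u v ↔ LexLe c v u := by
  rw [LexLe, LexLe, lexLt_not_iff, eq_comm]

variable {K : Bool → ℕ → Bool} {x : ℕ → Bool}

lemma TailsBetween.shift_encode_le (hK : Framed K) (o : OuterCoding) (hx : TailsBetween K x)
    (n : ℕ) : seqLe (shift n (o.encode x)) (o.encode (K false)) := by
  rw [o.shift_encode, ← cons_apply_shift, eq_cons_of_head (hK false).1]
  have upper : seqLe (o.encode (cons false (shift (n + 1) x)))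
      (o.encode (cons false (shift 1 (K false)))) :=
    LexLe.encode o rfl ((hx (n + 1) false).cons _)
  cases x n
  · exact upper
  · exact seqLe_trans (o.encode_cons_true_le _) upper

lemma TailsBetween.le_shift_encode (hK : Framed K) (o : OuterCoding) (hx : TailsBetween K x)
    (n : ℕ) : seqLe (o.encode (K true)) (shift n (o.encode x)) := by
  rw [o.shift_encode, ← cons_apply_shift, eq_cons_of_head (hK true).1]
  have lower : seqLe (o.encode (cons true (shift 1 (K true))))
      (o.encode (cons true (shift (n + 1) x))) :=
    LexLe.encode o rfl ((lexLe_not_iff (c := false).mp (hx (n + 1) true)).cons _)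
  cases x n
  · exact seqLe_trans lower (o.encode_cons_true_le _)
  · exact lower

end Encode

/-! ### Compositions of the elementary substitutions -/

/-- The elementary substitutions: `A` sends `1` to `10` and keeps `0`, `B` sends `0` to `01` and
keeps `1`, and `M` sends `0` to `01` and `1` to `10`. -/
inductive Gen
  | A
  | B
  | M

/-- The letters expanded by an elementary substitution. -/
def Gen.flag : Gen → Bool → Bool
  | .A, c => c
  | .B, c => !c
  | .M, _ => true

lemma Gen.exists_flag (a : Gen) : ∃ c, a.flag c = true := by
  cases a
  exacts [⟨true, rfl⟩, ⟨false, rfl⟩, ⟨true, rfl⟩]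

/-- Composition of elementary substitutions, the first one being outermost. -/
def expandList (l : List Gen) (x : ℕ → Bool) : ℕ → Bool :=
  l.foldr (fun a y => expand a.flag y) x

section ExpandList

variable {l : List Gen} {n : ℕ} {c : Bool} {u v x : ℕ → Bool} {K : Bool → ℕ → Bool}

@[simp] lemma expandList_nil (x : ℕ → Bool) : expandList [] x = x := rfl

@[simp] lemma expandList_cons (a : Gen) (l : List Gen) (x : ℕ → Bool) :
    expandList (a :: l) x = expand a.flag (expandList l x) := rfl

lemma expandList_append (l l' : List Gen) (x : ℕ → Bool) :
    expandList (l ++ l') x = expandList l (expandList l' x) :=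
  List.foldr_append

lemma expandList_replicate {a : Gen} (h : expand a.flag x = x) (n : ℕ) :
    expandList (List.replicate n a) x = x := by
  induction n with
  | zero => rfl
  | succ n ih => rw [List.replicate_succ, expandList_cons, ih, h]

@[simp] lemma expandList_apply_zero (l : List Gen) (x : ℕ → Bool) : expandList l x 0 = x 0 := by
  induction l with
  | nil => rfl
  | cons _ _ ih => exact ih

lemma expandList_apply_one (l : List Gen) (hu : u 1 = !u 0) :
    expandList l u 1 = !(expandList l u 0) := by
  induction l with
  | nil => exact hu
  | cons a l ih => exact expand_apply_one ih

protected lemma LexLt.expandList (l : List Gen) (h : LexLt c u v) :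
    LexLt c (expandList l u) (expandList l v) := by
  induction l with
  | nil => exact h
  | cons a l ih => exact ih.expand _

protected lemma AgreeUpTo.expandList (l : List Gen) (h : AgreeUpTo 2 u v) (hu : u 1 = !u 0) :
    AgreeUpTo (l.length + 2) (expandList l u) (expandList l v) := by
  induction l with
  | nil => exact h
  | cons a l ih => exact ih.expand_succ a.exists_flag (expandList_apply_one l hu)

protected lemma AgreeUpTo.of_expandList
    (h : AgreeUpTo (2 ^ l.length * n) (expandList l u) (expandList l v)) : AgreeUpTo n u v := by
  induction l with
  | nil => simpa using h
  | cons a l ih =>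
    refine ih (AgreeUpTo.of_expand (g := a.flag) ?_)
    rwa [← mul_assoc, ← pow_succ']

protected lemma Framed.expandList (hK : Framed K) (l : List Gen) :
    Framed fun c => expandList l (K c) := by
  induction l with
  | nil => exact hK
  | cons a l ih => exact ih.expand a.flag

protected lemma TailsBetween.expandList (hK : Framed K) (l : List Gen) (hx : TailsBetween K x) :
    TailsBetween (fun c => expandList l (K c)) (expandList l x) := by
  induction l with
  | nil => exact hx
  | cons a l ih => exact ih.expand (hK.expandList l) a.flag

end ExpandList

/-! ### Eventually constant and alternating sequences -/

/-- The alternating sequence starting with `c`. -/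
def alternating : Bool → ℕ → Bool
  | c, 0 => c
  | c, i + 1 => alternating (!c) i

/-- The sequence `0 1^∞`. -/
def zeroOnes : ℕ → Bool := cons false (Function.const ℕ true)

/-- The sequence `1 0^∞`. -/
def oneZeros : ℕ → Bool := cons true (Function.const ℕ false)

/-- The sequence `1 0 1^∞`. -/
def oneZeroOnes : ℕ → Bool := cons true zeroOnes

/-- The sequence `0 1 0^∞`. -/
def zeroOneZeros : ℕ → Bool := cons false oneZeros

lemma const_eq_cons (c : Bool) : Function.const ℕ c = cons c (Function.const ℕ c) := by
  funext i
  cases i <;> rfl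

lemma alternating_eq_cons (c : Bool) : alternating c = cons c (alternating (!c)) := by
  funext i
  cases i <;> rfl

lemma eq_const_of_eq_cons {c : Bool} {y : ℕ → Bool} (h : y = cons c y) :
    y = Function.const ℕ c := by
  funext i
  induction i with
  | zero => rw [h]; rfl
  | succ i ih => rw [h]; exact ih

lemma eq_alternating_of_eq_cons {c : Bool} {y : ℕ → Bool} (h : y = cons c (cons (!c) y)) :
    y = alternating c := by
  refine eq_of_agreeUpTo fun n => ?_
  induction n using Nat.twoStepInduction with
  | zero => exact agreeUpTo_zero _ _
  | one => exact agreeUpTo_succ_iff.mpr ⟨by rw [h]; rfl, agreeUpTo_zero _ _⟩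
  | more n ih _ =>
    rw [h, alternating_eq_cons, alternating_eq_cons (!c), Bool.not_not]
    exact (ih.cons _).cons _

lemma expand_const_of_false {g : Bool → Bool} {c : Bool} (h : g c = false) :
    expand g (Function.const ℕ c) = Function.const ℕ c :=
  eq_const_of_eq_cons (by conv_lhs => rw [const_eq_cons, expand_cons_of_false h])

lemma expand_const_of_true {g : Bool → Bool} {c : Bool} (h : g c = true) :
    expand g (Function.const ℕ c) = alternating c :=
  eq_alternating_of_eq_cons (by conv_lhs => rw [const_eq_cons, expand_cons_of_true h])

lemma expand_A_oneZeros : expand Gen.A.flag oneZeros = oneZeros := by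
  rw [oneZeros, expand_cons_of_true rfl, expand_const_of_false rfl]
  exact congrArg (cons true) (const_eq_cons false).symm

lemma expand_A_zeroOneZeros : expand Gen.A.flag zeroOneZeros = zeroOneZeros := by
  rw [zeroOneZeros, expand_cons_of_false rfl, expand_A_oneZeros]

lemma expand_B_zeroOnes : expand Gen.B.flag zeroOnes = zeroOnes := by
  rw [zeroOnes, expand_cons_of_true rfl, expand_const_of_false rfl]
  exact congrArg (cons false) (const_eq_cons true).symm

lemma expand_B_oneZeroOnes : expand Gen.B.flag oneZeroOnes = oneZeroOnes := by
  rw [oneZeroOnes, expand_cons_of_false rfl, expand_B_zeroOnes]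

lemma expand_A_zeroOnes : expand Gen.A.flag zeroOnes = alternating false := by
  rw [zeroOnes, expand_cons_of_false rfl, expand_const_of_true rfl]
  exact (alternating_eq_cons false).symm

lemma expand_B_oneZeros : expand Gen.B.flag oneZeros = alternating true := by
  rw [oneZeros, expand_cons_of_false rfl, expand_const_of_true rfl]
  exact (alternating_eq_cons true).symm

lemma expand_M_const (c : Bool) : expand Gen.M.flag (Function.const ℕ c) = alternating c :=
  expand_const_of_true rfl

lemma expand_M_zeroOnes : expand Gen.M.flag zeroOnes = expand Gen.B.flag zeroOneZeros := by
  rw [zeroOnes, expand_cons_of_true rfl, expand_M_const, zeroOneZeros, expand_cons_of_true rfl,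
    expand_B_oneZeros]

lemma expand_A_oneZeroOnes : expand Gen.A.flag oneZeroOnes = expand Gen.M.flag oneZeros := by
  rw [oneZeroOnes, expand_cons_of_true rfl, expand_A_zeroOnes, oneZeros, expand_cons_of_true rfl,
    expand_M_const]

lemma zeroOneZeros_lexLt_zeroOnes : LexLt false zeroOneZeros zeroOnes :=
  ⟨2, fun i hi => by interval_cases i <;> rfl, rfl, rfl⟩

lemma alternating_lexLt_zeroOnes : LexLt false (alternating false) zeroOnes :=
  ⟨2, fun i hi => by interval_cases i <;> rfl, rfl, rfl⟩

lemma agreeUpTo_two_oneZeros_oneZeroOnes : AgreeUpTo 2 oneZeros oneZeroOnes :=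
  fun i hi => by interval_cases i <;> rfl

lemma agreeUpTo_two_zeroOneZeros_zeroOnes : AgreeUpTo 2 zeroOneZeros zeroOnes :=
  fun i hi => by interval_cases i <;> rfl

lemma lexLe_const (c : Bool) (u : ℕ → Bool) : LexLe c u (Function.const ℕ (!c)) := by
  refine lexLe_of_not_lexLt ?_
  rintro ⟨n, -, h, -⟩
  exact Bool.not_ne_self c h

/-! ### Coded sequences of a node -/

/-- The digit sequence coded by `x` at the node `(o, l)` of the renormalization tree. -/
def code (o : OuterCoding) (l : List Gen) (x : ℕ → Bool) : ℕ → ℕ := o.encode (expandList l x)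

section Code

variable (o : OuterCoding) (l : List Gen) {n : ℕ} {u v x : ℕ → Bool} {K : Bool → ℕ → Bool}

lemma code_append (l' : List Gen) (x : ℕ → Bool) :
    code o (l ++ l') x = code o l (expandList l' x) := by
  rw [code, expandList_append, code]

lemma code_concat (a : Gen) (x : ℕ → Bool) : code o (l ++ [a]) x = code o l (expand a.flag x) :=
  code_append o l [a] x

lemma code_le_maxDigit (x : ℕ → Bool) (i : ℕ) : code o l x i ≤ o.maxDigit :=
  o.digit_le_maxDigit _ _

protected lemma LexLt.code (h0 : u 0 = v 0) (h : LexLt false u v) :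
    seqLt (code o l u) (code o l v) :=
  LexLt.encode o (by simpa using h0) (h.expandList l)

protected lemma AgreeUpTo.code (h : AgreeUpTo 2 u v) (hu : u 1 = !u 0) :
    AgreeUpTo (l.length + 1) (code o l u) (code o l v) :=
  (h.expandList l hu).encode o

variable {o l} in
protected lemma AgreeUpTo.of_code (h0 : u 0 = v 0)
    (h : AgreeUpTo (2 ^ l.length * n) (code o l u) (code o l v)) : AgreeUpTo n u v :=
  AgreeUpTo.of_expandList ((AgreeUpTo.of_encode (by simpa using h0) h).mono (Nat.le_succ _))

lemma TailsBetween.shift_code_le (hK : Framed K) (hx : TailsBetween K x) (n : ℕ) :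
    seqLe (shift n (code o l x)) (code o l (K false)) :=
  (hx.expandList hK l).shift_encode_le (hK.expandList l) o n

lemma TailsBetween.le_shift_code (hK : Framed K) (hx : TailsBetween K x) (n : ℕ) :
    seqLe (code o l (K true)) (shift n (code o l x)) :=
  (hx.expandList hK l).le_shift_encode (hK.expandList l) o n

/-- The frame `0 1^∞`, `1 0^∞`, between which all tails lie. -/
def wideFrame (c : Bool) : ℕ → Bool := cons c (Function.const ℕ (!c))

lemma framed_wideFrame : Framed wideFrame := fun _ => ⟨rfl, rfl⟩

lemma tailsBetween_wideFrame (x : ℕ → Bool) : TailsBetween wideFrame x := fun _ c => lexLe_const c _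

lemma shift_code_le_code_zeroOnes (x : ℕ → Bool) (n : ℕ) :
    seqLe (shift n (code o l x)) (code o l zeroOnes) :=
  (tailsBetween_wideFrame x).shift_code_le o l framed_wideFrame n

lemma code_oneZeros_le_shift_code (x : ℕ → Bool) (n : ℕ) :
    seqLe (code o l oneZeros) (shift n (code o l x)) :=
  (tailsBetween_wideFrame x).le_shift_code o l framed_wideFrame n

lemma shift_code_zeroOneZeros_le (n : ℕ) :
    seqLe (shift n (code o l zeroOneZeros)) (code o l zeroOneZeros) := by
  let K : Bool → ℕ → Bool := fun c => bif c then oneZeros else zeroOneZeros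
  have hK : Framed K := by intro c; cases c <;> exact ⟨rfl, rfl⟩
  have hx : TailsBetween K zeroOneZeros := by
    intro n c
    cases c with
    | true => exact lexLe_const true _
    | false =>
      change LexLe false (shift n zeroOneZeros) oneZeros
      match n with
      | 0 => exact Or.inr (lexLt_of_head rfl rfl)
      | 1 => exact Or.inl rfl
      | n + 2 => exact Or.inr (lexLt_of_head (by simp [zeroOneZeros, oneZeros]) rfl)
  exact hx.shift_code_le o l hK n

end Code
/-! ### Infinitely many nonzero digits -/

lemma frequently_atTop_iff_forall_exists_shift {α : Type*} {p : α → Prop} {x : ℕ → α} :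
    (∃ᶠ i in atTop, p (x i)) ↔ ∀ n, ∃ i, p (shift n x i) := by
  rw [frequently_atTop]
  refine forall_congr' fun n => ⟨?_, fun ⟨i, hi⟩ => ⟨i + n, Nat.le_add_left n i, hi⟩⟩
  rintro ⟨i, hni, hi⟩
  exact ⟨i - n, by rwa [shift_apply, Nat.sub_add_cancel hni]⟩

lemma exists_expand_eq_true (g : Bool → Bool) {x : ℕ → Bool} (h : ∃ i, x i = true) :
    ∃ i, expand g x i = true := by
  obtain ⟨i, hi⟩ := h
  induction i generalizing x with
  | zero => exact ⟨0, hi⟩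
  | succ i ih =>
    obtain ⟨j, hj⟩ := ih (x := shift 1 x) hi
    rw [← cons_head x]
    cases hg : g (x 0)
    · exact ⟨j + 1, by rw [expand_cons_of_false hg]; exact hj⟩
    · exact ⟨j + 2, by rw [expand_cons_of_true hg]; exact hj⟩

lemma frequently_expand_eq_true (g : Bool → Bool) {x : ℕ → Bool}
    (h : ∃ᶠ i in atTop, x i = true) : ∃ᶠ i in atTop, expand g x i = true := by
  have tails := (frequently_atTop_iff_forall_exists_shift (p := (· = true))).mp h
  refine (frequently_atTop_iff_forall_exists_shift (p := (· = true))).mpr fun n => ?_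
  obtain ⟨m, e | ⟨-, e⟩⟩ := exists_shift_expand g x n <;> rw [e]
  · exact exists_expand_eq_true g (tails m)
  · obtain ⟨i, hi⟩ := exists_expand_eq_true g (tails (m + 1))
    exact ⟨i + 1, hi⟩

lemma frequently_expandList_eq_true (l : List Gen) {x : ℕ → Bool}
    (h : ∃ᶠ i in atTop, x i = true) : ∃ᶠ i in atTop, expandList l x i = true := by
  induction l with
  | nil => exact h
  | cons a l ih => exact frequently_expand_eq_true a.flag ih

lemma frequently_code_ne_zero (o : OuterCoding) (l : List Gen) {x : ℕ → Bool}
    (h : ∃ᶠ i in atTop, x i = true) : ∃ᶠ i in atTop, code o l x i ≠ 0 := by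
  have tails := (frequently_atTop_iff_forall_exists_shift (p := (· = true))).mp
    (frequently_expandList_eq_true l h)
  refine (frequently_atTop_iff_forall_exists_shift (p := (· ≠ 0))).mpr fun n => ?_
  obtain ⟨i, hi⟩ := tails (n + 1)
  refine ⟨i, ?_⟩
  change o.digit _ (expandList l x (i + (n + 1))) ≠ 0
  rw [show expandList l x (i + (n + 1)) = true from hi, o.digit_true]
  exact Nat.succ_ne_zero _

lemma frequently_zeroOnes_eq_true : ∃ᶠ i in atTop, zeroOnes i = true :=
  frequently_atTop.mpr fun n => ⟨n + 1, n.le_succ, rfl⟩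

/-! ### Values of digit sequences -/

section ValSeq

variable {β : ℝ} {C D : ℕ} {c d : ℕ → ℕ}

lemma summable_valSeq (hβ : 1 < β) (hc : ∀ i, c i ≤ C) :
    Summable fun i => (c i : ℝ) / β ^ (i + 1) := by
  have : 0 < β := zero_lt_one.trans hβ
  have geometric : Summable fun i : ℕ => (C : ℝ) * β⁻¹ ^ i :=
    (summable_geometric_of_lt_one (by positivity) (inv_lt_one_of_one_lt₀ hβ)).mul_left _
  refine geometric.of_nonneg_of_le (fun i => by positivity) fun i => ?_
  rw [inv_pow, ← div_eq_mul_inv]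
  have digit_le : (c i : ℝ) ≤ C := mod_cast hc i
  have pow_le : β ^ i ≤ β ^ (i + 1) := pow_le_pow_right₀ hβ.le i.le_succ
  gcongr

lemma valSeq_nonneg (hβ : 1 < β) (c : ℕ → ℕ) : 0 ≤ valSeq β c :=
  tsum_nonneg fun i => by positivity

lemma valSeq_pos (hβ : 1 < β) (hc : ∀ i, c i ≤ C) (h : ∃ i, c i ≠ 0) : 0 < valSeq β c := by
  obtain ⟨i, hi⟩ := h
  have : 0 < β := zero_lt_one.trans hβ
  exact (summable_valSeq hβ hc).tsum_pos (fun i => by positivity) i (by positivity)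

lemma valSeq_eq_head_add_tail (hβ : 1 < β) (hc : ∀ i, c i ≤ C) :
    valSeq β c = (c 0 + valSeq β (shift 1 c)) / β := by
  rw [valSeq, (summable_valSeq hβ hc).tsum_eq_zero_add, valSeq, add_div, ← tsum_div_const,
    zero_add, pow_one]
  exact congrArg _ (tsum_congr fun i => by rw [shift_apply, pow_succ β (i + 1), div_div])

lemma valSeq_const (hβ : 1 < β) (C : ℕ) : valSeq β (fun _ => C) = C / (β - 1) := by
  have h : valSeq β (fun _ => C) = (C + valSeq β (fun _ => C)) / β :=
    valSeq_eq_head_add_tail hβ (c := fun _ => C) fun _ => le_rfl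
  have hβ0 : β ≠ 0 := by linarith
  have hβ1 : β - 1 ≠ 0 := by linarith
  field_simp at h ⊢
  linarith

lemma valSeq_le (hβ : 1 < β) (hc : ∀ i, c i ≤ C) : valSeq β c ≤ C / (β - 1) := by
  rw [← valSeq_const hβ C]
  refine (summable_valSeq hβ hc).tsum_le_tsum (fun i => ?_)
    (summable_valSeq hβ fun _ => le_rfl)
  have digit_le : (c i : ℝ) ≤ C := mod_cast hc i
  gcongr

lemma shift_le (hc : ∀ i, c i ≤ C) (n i : ℕ) : shift n c i ≤ C := hc (i + n)

lemma valSeq_shift_eq_head_add_tail (hβ : 1 < β) (hc : ∀ i, c i ≤ C) (n : ℕ) :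
    valSeq β (shift n c) = (c n + valSeq β (shift (n + 1) c)) / β := by
  rw [valSeq_eq_head_add_tail hβ (shift_le hc n), shift_shift, add_comm 1 n, shift_apply,
    zero_add]

lemma abs_valSeq_sub_le (hβ : 1 < β) {n : ℕ} (hc : ∀ i, c i ≤ C) (hd : ∀ i, d i ≤ C)
    (h : AgreeUpTo n c d) : |valSeq β c - valSeq β d| ≤ C / (β - 1) / β ^ n := by
  induction n generalizing c d with
  | zero =>
    rw [pow_zero, div_one, abs_le]
    constructor <;> linarith [valSeq_nonneg hβ c, valSeq_nonneg hβ d, valSeq_le hβ hc,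
      valSeq_le hβ hd]
  | succ n ih =>
    have tails := ih (shift_le hc 1) (shift_le hd 1) h.tail
    rw [valSeq_eq_head_add_tail hβ hc, valSeq_eq_head_add_tail hβ hd, h 0 n.succ_pos, ← sub_div,
      add_sub_add_left_eq_sub, abs_div, abs_of_pos (zero_lt_one.trans hβ), pow_succ, ← div_div]
    gcongr

lemma div_pow_le_valSeq_sub (hβ : 1 < β) {n : ℕ} (hc : ∀ i, c i ≤ C) (hd : ∀ i, d i ≤ D)
    (h : AgreeUpTo n c d) (hn : c n < d n) :
    (1 + valSeq β (shift (n + 1) d) - valSeq β (shift (n + 1) c)) / β ^ (n + 1) ≤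
      valSeq β d - valSeq β c := by
  induction n generalizing c d with
  | zero =>
    rw [valSeq_eq_head_add_tail hβ hc, valSeq_eq_head_add_tail hβ hd, zero_add, pow_one, ← sub_div]
    have heads : (c 0 : ℝ) + 1 ≤ d 0 := mod_cast hn
    gcongr ?_ / β
    linarith
  | succ n ih =>
    have tails := ih (shift_le hc 1) (shift_le hd 1) h.tail hn
    rw [shift_shift, shift_shift] at tails
    rw [valSeq_eq_head_add_tail hβ hc, valSeq_eq_head_add_tail hβ hd, h 0 n.succ_pos, ← sub_div,
      add_sub_add_left_eq_sub, pow_succ, ← div_div]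
    gcongr

lemma valSeq_le_of_seqLe (hβ : 1 < β) (hc : ∀ i, c i ≤ C) (hd : ∀ i, d i ≤ D)
    (tails : ∀ n, valSeq β (shift n c) ≤ 1) (h : seqLe c d) : valSeq β c ≤ valSeq β d := by
  rcases h with rfl | ⟨n, hn, hlt⟩
  · exact le_rfl
  · refine sub_nonneg.mp (le_trans (div_nonneg ?_ ?_) (div_pow_le_valSeq_sub hβ hc hd hn hlt))
    · linarith [tails (n + 1), valSeq_nonneg hβ (shift (n + 1) d)]
    · positivity

lemma valSeq_lt_of_seqLt (hβ : 1 < β) (hc : ∀ i, c i ≤ C) (hd : ∀ i, d i ≤ D)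
    (tails : ∀ n, valSeq β (shift n c) ≤ 1) (h : seqLt c d) (hd0 : ∃ᶠ i in atTop, d i ≠ 0) :
    valSeq β c < valSeq β d := by
  obtain ⟨n, hn, hlt⟩ := h
  have tail_pos : 0 < valSeq β (shift (n + 1) d) :=
    valSeq_pos hβ (shift_le hd _) (frequently_atTop_iff_forall_exists_shift.mp hd0 (n + 1))
  refine sub_pos.mp (lt_of_lt_of_le (div_pos ?_ ?_) (div_pow_le_valSeq_sub hβ hc hd hn hlt))
  · linarith [tails (n + 1)]
  · positivity

lemma nonpos_of_forall_exists_le_div {ι : Type*} {f : ι → ℝ} (hβ : 1 < β)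
    (hf : BddAbove (range f)) (h : ∀ i, 0 < f i → ∃ j, f i ≤ f j / β) (i : ι) : f i ≤ 0 := by
  by_contra! hi
  have sup_pos : 0 < ⨆ j, f j := hi.trans_le (le_ciSup hf i)
  have le_sup_div (j : ι) : f j ≤ (⨆ j, f j) / β := by
    rcases le_or_gt (f j) 0 with hj | hj
    · exact hj.trans (by positivity)
    · obtain ⟨k, hk⟩ := h j hj
      exact hk.trans (by gcongr; exact le_ciSup hf k)
  have : Nonempty ι := ⟨i⟩
  exact (ciSup_le le_sup_div).not_gt (div_lt_self sup_pos hβ)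

lemma valSeq_shift_le_one (hβ : 1 < β) (hc : ∀ i, c i ≤ C) (hd : ∀ i, d i ≤ D)
    (hd1 : valSeq β d ≤ 1) (h : ∀ n, seqLe (shift n c) d) (n : ℕ) :
    valSeq β (shift n c) ≤ 1 := by
  refine sub_nonpos.mp (nonpos_of_forall_exists_le_div (f := fun n => valSeq β (shift n c) - 1) hβ
    ⟨C / (β - 1) - 1, ?_⟩ (fun n hn => ?_) n)
  · rintro _ ⟨n, rfl⟩
    linarith [valSeq_le hβ (shift_le hc n)]
  · rcases h n with e | ⟨m, hm, hlt⟩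
    · exact absurd hd1 (by linarith [congrArg (valSeq β) e])
    · refine ⟨m + 1 + n, ?_⟩
      have gap := div_pow_le_valSeq_sub hβ (shift_le hc n) hd hm hlt
      rw [shift_shift] at gap
      have pow_pos : 0 < β ^ (m + 1) := by positivity
      have tail_le : 1 - valSeq β (shift (m + 1 + n) c) ≤
          1 + valSeq β (shift (m + 1) d) - valSeq β (shift (m + 1 + n) c) := by
        linarith [valSeq_nonneg hβ (shift (m + 1) d)]
      have excess_le : valSeq β (shift n c) - 1 ≤
          (valSeq β (shift (m + 1 + n) c) - 1) / β ^ (m + 1) := by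
        have := (div_le_div_of_nonneg_right tail_le pow_pos.le).trans gap
        rw [← neg_sub 1 (valSeq β (shift (m + 1 + n) c)), neg_div]
        linarith
      have excess_pos : 0 < valSeq β (shift (m + 1 + n) c) - 1 :=
        (div_pos_iff_of_pos_right pow_pos).mp (hn.trans_le excess_le)
      refine excess_le.trans (div_le_div_of_nonneg_left excess_pos.le (by linarith) ?_)
      exact le_self_pow₀ hβ.le m.succ_ne_zero

end ValSeq

/-! ### Dependence on the base -/

section Base

variable {β β' : ℝ} {C : ℕ} {c : ℕ → ℕ}

lemma valSeq_le_of_base_le (hβ : 1 < β) (h : β ≤ β') (hc : ∀ i, c i ≤ C) :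
    valSeq β' c ≤ valSeq β c := by
  refine (summable_valSeq (hβ.trans_le h) hc).tsum_le_tsum (fun i => ?_) (summable_valSeq hβ hc)
  gcongr

lemma valSeq_lt_of_base_lt (hβ : 1 < β) (h : β < β') (hc : ∀ i, c i ≤ C) (hc0 : ∃ i, c i ≠ 0) :
    valSeq β' c < valSeq β c := by
  obtain ⟨j, hj⟩ := hc0
  have : (0 : ℝ) < c j := mod_cast hj.pos
  refine (summable_valSeq (hβ.trans h) hc).tsum_lt_tsum (i := j) (fun i => ?_) ?_
    (summable_valSeq hβ hc) <;> gcongr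

lemma continuousAt_valSeq (hβ : 1 < β) (hc : ∀ i, c i ≤ C) :
    ContinuousAt (fun b => valSeq b c) β := by
  obtain ⟨a, ha1, ha⟩ := exists_between hβ
  have ha0 : 0 < a := zero_lt_one.trans ha1
  have h : ContinuousOn (fun b => valSeq b c) (Ici a) := by
    refine continuousOn_tsum (fun i => ?_) (summable_valSeq ha1 hc) fun i b hb => ?_
    · exact continuousOn_const.div (continuousOn_id.pow _) fun b hb =>
        pow_ne_zero _ (ha0.trans_le hb).ne'
    · have hab : a ≤ b := hb
      have hb0 : 0 < b := ha0.trans_le hab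
      rw [Real.norm_of_nonneg (by positivity)]
      gcongr
  exact h.continuousAt (Ici_mem_nhds ha)

lemma exists_base_ge_valSeq_eq_one (hβ : 1 < β) (hc : ∀ i, c i ≤ C) (h : 1 ≤ valSeq β c) :
    ∃ β', β ≤ β' ∧ valSeq β' c = 1 := by
  let B : ℝ := max β (C + 1)
  have hB : 1 < B := hβ.trans_le (le_max_left _ _)
  have value_le : valSeq B c ≤ 1 := by
    refine (valSeq_le hB hc).trans ((div_le_one (by linarith)).mpr ?_)
    linarith [le_max_right β (C + 1 : ℝ)]
  have hcont : ContinuousOn (fun b => valSeq b c) (Icc β B) := fun b hb =>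
    (continuousAt_valSeq (hβ.trans_le hb.1) hc).continuousWithinAt
  obtain ⟨b, hb, hb1⟩ := intermediate_value_Icc' (le_max_left β _) hcont ⟨value_le, h⟩
  exact ⟨b, hb.1, hb1⟩

lemma inv_pow_add_inv_pow_le_valSeq (hβ : 1 < β) (hc : ∀ i, c i ≤ C) {i j : ℕ} (hij : i ≠ j)
    (hi : c i ≠ 0) (hj : c j ≠ 0) : (β ^ (i + 1))⁻¹ + (β ^ (j + 1))⁻¹ ≤ valSeq β c := by
  have one_le {k : ℕ} (hk : c k ≠ 0) : (β ^ (k + 1))⁻¹ ≤ c k / β ^ (k + 1) := by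
    have : (1 : ℝ) ≤ c k := mod_cast Nat.one_le_iff_ne_zero.mpr hk
    rw [inv_eq_one_div]
    gcongr
  have sum_le := (summable_valSeq hβ hc).sum_le_tsum {i, j} fun k _ => by positivity
  rw [Finset.sum_pair hij] at sum_le
  exact (add_le_add (one_le hi) (one_le hj)).trans sum_le

/-- Two nonzero digits already push the value above `1` for bases close to `1`. -/
lemma exists_base_valSeq_eq_one (hc : ∀ i, c i ≤ C) (h : ∃ᶠ i in atTop, c i ≠ 0) :
    ∃ β, 1 < β ∧ valSeq β c = 1 := by
  obtain ⟨i, -, hi⟩ := frequently_atTop.mp h 0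
  obtain ⟨j, hij, hj⟩ := frequently_atTop.mp h (i + 1)
  have hcont : ContinuousAt (fun b : ℝ => (b ^ (i + 1))⁻¹ + (b ^ (j + 1))⁻¹) 1 := by
    have (k : ℕ) : ContinuousAt (fun b : ℝ => (b ^ (k + 1))⁻¹) 1 :=
      (continuousAt_id.pow _).inv₀ (by simp)
    exact (this i).add (this j)
  have near_one : ∀ᶠ b : ℝ in 𝓝[>] 1, 1 < (b ^ (i + 1))⁻¹ + (b ^ (j + 1))⁻¹ :=
    (hcont.eventually (lt_mem_nhds (by norm_num))).filter_mono nhdsWithin_le_nhds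
  obtain ⟨β, hβ, hβ1⟩ := (near_one.and self_mem_nhdsWithin).exists
  obtain ⟨β', hββ', hβ'⟩ := exists_base_ge_valSeq_eq_one hβ1 hc
    (hβ.le.trans (inv_pow_add_inv_pow_le_valSeq hβ1 hc (Nat.ne_of_lt hij) hi hj))
  exact ⟨β', lt_of_lt_of_le hβ1 hββ', hβ'⟩

end Base

/-! ### Orbits and greedy digits -/

section Orbits

variable {β x t : ℝ} {C : ℕ} {c : ℕ → ℕ}

lemma Tbeta_iterate_valSeq (hβ : 1 < β) (hc : ∀ i, c i ≤ C) (h : ∀ n, valSeq β (shift n c) < 1)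
    (n : ℕ) : (Tbeta β)^[n] (valSeq β c) = valSeq β (shift n c) := by
  induction n with
  | zero => rfl
  | succ n ih =>
    rw [Function.iterate_succ_apply', ih, valSeq_shift_eq_head_add_tail hβ hc, Tbeta,
      mul_div_cancel₀ _ (by linarith), Int.fract_natCast_add, Int.fract_eq_self]
    exact ⟨valSeq_nonneg hβ _, h _⟩

/-- The greedy digits of `x` in base `β`. -/
noncomputable def greedyDigits (β x : ℝ) : ℕ → ℕ := fun n => ⌊β * (Tbeta β)^[n] x⌋₊

lemma Tbeta_iterate_mem_Ico (hx : x ∈ Ico (0 : ℝ) 1) (n : ℕ) :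
    (Tbeta β)^[n] x ∈ Ico (0 : ℝ) 1 := by
  cases n with
  | zero => exact hx
  | succ n =>
    rw [Function.iterate_succ_apply']
    exact ⟨Int.fract_nonneg _, Int.fract_lt_one _⟩

lemma greedyDigits_le (hβ : 1 < β) (hx : x ∈ Ico (0 : ℝ) 1) (n : ℕ) :
    greedyDigits β x n ≤ ⌊β⌋₊ := by
  have hT := Tbeta_iterate_mem_Ico (β := β) hx n
  exact Nat.floor_le_floor (mul_le_of_le_one_right (by linarith) hT.2.le)

lemma Tbeta_iterate_eq_greedyDigits_add (hβ : 1 < β) (hx : x ∈ Ico (0 : ℝ) 1) (n : ℕ) :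
    (Tbeta β)^[n] x = (greedyDigits β x n + (Tbeta β)^[n + 1] x) / β := by
  have hβ0 : 0 < β := zero_lt_one.trans hβ
  have hn : 0 ≤ β * (Tbeta β)^[n] x := mul_nonneg hβ0.le (Tbeta_iterate_mem_Ico hx n).1
  rw [Function.iterate_succ_apply', Tbeta, greedyDigits, eq_div_iff hβ0.ne',
    natCast_floor_eq_intCast_floor hn, Int.floor_add_fract, mul_comm]

lemma Tbeta_iterate_eq_valSeq_greedyDigits (hβ : 1 < β) (hx : x ∈ Ico (0 : ℝ) 1) (n : ℕ) :
    (Tbeta β)^[n] x = valSeq β (shift n (greedyDigits β x)) := by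
  have hd := greedyDigits_le hβ hx
  refine sub_eq_zero.mp (abs_nonpos_iff.mp (nonpos_of_forall_exists_le_div
    (f := fun n => |(Tbeta β)^[n] x - valSeq β (shift n (greedyDigits β x))|) hβ
    ⟨1 + ⌊β⌋₊ / (β - 1), ?_⟩ (fun n _ => ⟨n + 1, ?_⟩) n))
  · rintro _ ⟨n, rfl⟩
    have hT := Tbeta_iterate_mem_Ico (β := β) hx n
    have value_nonneg := valSeq_nonneg hβ (shift n (greedyDigits β x))
    have value_le := valSeq_le hβ (shift_le hd n)
    exact abs_le.mpr ⟨by linarith [hT.1], by linarith [hT.2]⟩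
  · rw [Tbeta_iterate_eq_greedyDigits_add hβ hx, valSeq_shift_eq_head_add_tail hβ hd, ← sub_div,
      add_sub_add_left_eq_sub, abs_div, abs_of_pos (zero_lt_one.trans hβ)]

lemma seqLt_of_not_seqLe {c d : ℕ → ℕ} (h : ¬ seqLe d c) : seqLt c d :=
  seqLt_iff_toLex_lt.mpr (not_le.mp fun h' => h (seqLe_iff_toLex_le.mpr h'))

lemma shift_greedyDigits_seqLt (hβ : 1 < β) (hx : x ∈ Ico (0 : ℝ) 1) (hc : ∀ i, c i ≤ C)
    (hself : ∀ n, seqLe (shift n c) c) (h1 : 1 ≤ valSeq β c) (n : ℕ) :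
    seqLt (shift n (greedyDigits β x)) c := by
  refine seqLt_of_not_seqLe fun hle => ?_
  have hd := shift_le (greedyDigits_le hβ hx) n
  obtain ⟨β', hββ', hβ'⟩ := exists_base_ge_valSeq_eq_one hβ hc h1
  have hβ'1 : 1 < β' := hβ.trans_le hββ'
  have : (1 : ℝ) < 1 := calc
    1 = valSeq β' c := hβ'.symm
    _ ≤ valSeq β' (shift n (greedyDigits β x)) :=
      valSeq_le_of_seqLe hβ'1 hc hd (valSeq_shift_le_one hβ'1 hc hc hβ'.le hself) hle
    _ ≤ valSeq β (shift n (greedyDigits β x)) := valSeq_le_of_base_le hβ hββ' hd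
    _ = (Tbeta β)^[n] x := (Tbeta_iterate_eq_valSeq_greedyDigits hβ hx n).symm
    _ < 1 := (Tbeta_iterate_mem_Ico hx n).2
  exact this.false

lemma seqLt_shift_greedyDigits (hβ : 1 < β) (hx : x ∈ survivor β t) (hc : ∀ i, c i ≤ C)
    (ht : valSeq β c < t) (n : ℕ) : seqLt c (shift n (greedyDigits β x)) := by
  refine seqLt_of_not_seqLe fun hle => ht.not_ge ?_
  have hd := shift_le (greedyDigits_le hβ hx.1) n
  calc t ≤ (Tbeta β)^[n] x := hx.2 n
    _ = valSeq β (shift n (greedyDigits β x)) := Tbeta_iterate_eq_valSeq_greedyDigits hβ hx.1 n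
    _ ≤ valSeq β c := valSeq_le_of_seqLe hβ hd hc (fun m => ?_) hle
  rw [shift_shift, ← Tbeta_iterate_eq_valSeq_greedyDigits hβ hx.1]
  exact (Tbeta_iterate_mem_Ico hx.1 _).2.le

end Orbits

/-! ### Dimension of separated trees -/

section SeparatedTree

variable {X : Type*} [MetricSpace X] {b : ℕ} {G : (ℕ → Fin b) → X} {c ρ : ℝ}

lemma abs_ofDigits_sub_le_of_separated (hb : 1 < b) (hc : 0 < c) (hρ : 0 < ρ) (hρ1 : ρ < 1)
    (hG : ∀ δ δ' m, AgreeUpTo m δ δ' → δ m ≠ δ' m → c * ρ ^ m ≤ dist (G δ) (G δ'))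
    (δ δ' : ℕ → Fin b) :
    |Real.ofDigits δ - Real.ofDigits δ'| ≤ (c⁻¹ * dist (G δ) (G δ')) ^ Real.logb ρ⁻¹ b := by
  have hρ' : 1 < ρ⁻¹ := (one_lt_inv₀ hρ).mpr hρ1
  by_cases hne : δ = δ'
  · rw [hne, sub_self, abs_zero]
    positivity
  · obtain ⟨m, hm, hmne⟩ := exists_agreeUpTo_apply_ne hne
    calc |Real.ofDigits δ - Real.ofDigits δ'| ≤ ((b : ℝ) ^ m)⁻¹ :=
          Real.abs_ofDigits_sub_ofDigits_le hm
      _ = (ρ ^ m) ^ Real.logb ρ⁻¹ b := by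
          rw [← Real.rpow_natCast ρ, ← Real.rpow_mul hρ.le, mul_comm, Real.rpow_mul hρ.le,
            ← inv_inv ρ, Real.inv_rpow (by positivity), inv_inv ρ,
            Real.rpow_logb (by positivity) hρ'.ne' (by positivity), Real.rpow_natCast, inv_pow]
      _ ≤ (c⁻¹ * dist (G δ) (G δ')) ^ Real.logb ρ⁻¹ b := by
          refine Real.rpow_le_rpow (by positivity) ?_
            (Real.logb_nonneg hρ' (mod_cast hb.le))
          rw [inv_mul_eq_div, le_div_iff₀ hc, mul_comm]
          exact hG δ δ' m hm hmne

/-- Reading off the digits of a point is a Hölder map onto the unit interval. -/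
lemma logb_le_dimH_range_of_separated (hb : 1 < b) (hc : 0 < c) (hρ : 0 < ρ) (hρ1 : ρ < 1)
    (hG : ∀ δ δ' m, AgreeUpTo m δ δ' → δ m ≠ δ' m → c * ρ ^ m ≤ dist (G δ) (G δ')) :
    ENNReal.ofReal (Real.logb ρ⁻¹ b) ≤ dimH (range G) := by
  have : NeZero b := ⟨by lia⟩
  have hr : 0 < Real.logb ρ⁻¹ b := Real.logb_pos ((one_lt_inv₀ hρ).mpr hρ1) (mod_cast hb)
  have hinj : Function.Injective G := by
    intro δ δ' h
    by_contra hne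
    obtain ⟨m, hm, hmne⟩ := exists_agreeUpTo_apply_ne hne
    have separated := hG δ δ' m hm hmne
    rw [h, dist_self] at separated
    exact separated.not_gt (by positivity)
  let H : X → ℝ := fun x => Real.ofDigits (Function.invFun G x)
  have hHG (δ : ℕ → Fin b) : H (G δ) = Real.ofDigits δ :=
    congrArg Real.ofDigits (Function.leftInverse_invFun hinj δ)
  have hHolder : HolderOnWith (Real.toNNReal (c⁻¹ ^ Real.logb ρ⁻¹ b))
      (Real.toNNReal (Real.logb ρ⁻¹ b)) H (range G) := by
    rintro _ ⟨δ, rfl⟩ _ ⟨δ', rfl⟩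
    rw [hHG, hHG, edist_dist, edist_dist, Real.coe_toNNReal _ hr.le,
      ENNReal.ofReal_rpow_of_nonneg dist_nonneg hr.le, ← ENNReal.ofReal_coe_nnreal,
      Real.coe_toNNReal _ (by positivity), ← ENNReal.ofReal_mul (by positivity),
      ← Real.mul_rpow (by positivity) dist_nonneg]
    exact ENNReal.ofReal_le_ofReal (abs_ofDigits_sub_le_of_separated hb hc hρ hρ1 hG δ δ')
  have unit_subset : Icc (0 : ℝ) 1 ⊆ H '' range G := fun x hx => by
    obtain ⟨δ, -, rfl⟩ := Real.ofDigits_SurjOn hb hx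
    exact ⟨G δ, mem_range_self δ, hHG δ⟩
  have dim_unit : dimH (Icc (0 : ℝ) 1) = 1 := by
    rw [Real.dimH_of_nonempty_interior (by simp), Module.finrank_self, Nat.cast_one]
  have one_le : 1 ≤ dimH (range G) / ENNReal.ofReal (Real.logb ρ⁻¹ b) :=
    dim_unit ▸ (dimH_mono unit_subset).trans (hHolder.dimH_image_le (Real.toNNReal_pos.mpr hr))
  rwa [ENNReal.le_div_iff_mul_le (Or.inl (ENNReal.ofReal_pos.mpr hr).ne')
    (Or.inl ENNReal.ofReal_ne_top), one_mul] at one_le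

end SeparatedTree

/-! ### Lower bounds for the critical value -/

section LowerBound

variable {β t : ℝ} {C N : ℕ} {c d : ℕ → ℕ}

lemma div_pow_le_abs_valSeq_sub (hβ : 1 < β) (ht : 0 ≤ t)
    (hc : ∀ i, c i ≤ C) (hd : ∀ i, d i ≤ C)
    (hc1 : ∀ n, valSeq β (shift n c) ∈ Icc t 1) (hd1 : ∀ n, valSeq β (shift n d) ∈ Icc t 1)
    (h : ¬ AgreeUpTo N c d) : t / β ^ N ≤ |valSeq β c - valSeq β d| := by
  obtain ⟨j, hj, hne⟩ := exists_agreeUpTo_apply_ne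
    (fun e => h (by rw [e]; exact fun _ _ => rfl) : c ≠ d)
  have hjN : j < N := not_le.mp fun hle => h (hj.mono hle)
  refine (div_le_div_of_nonneg_left ht (by positivity) (pow_le_pow_right₀ hβ.le hjN)).trans ?_
  rcases hne.lt_or_gt with hlt | hlt
  · rw [abs_sub_comm]
    refine le_trans ?_ ((div_pow_le_valSeq_sub hβ hc hd hj hlt).trans (le_abs_self _))
    gcongr
    linarith [(hc1 (j + 1)).2, (hd1 (j + 1)).1]
  · refine le_trans ?_ ((div_pow_le_valSeq_sub hβ hd hc hj.symm hlt).trans (le_abs_self _))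
    gcongr
    linarith [(hd1 (j + 1)).2, (hc1 (j + 1)).1]

lemma valSeq_shift_code_le_one {o : OuterCoding} {l : List Gen} (hβ : 1 < β)
    (hb : valSeq β (code o l zeroOnes) ≤ 1) (x : ℕ → Bool) (n : ℕ) :
    valSeq β (shift n (code o l x)) ≤ 1 :=
  valSeq_shift_le_one hβ (code_le_maxDigit o l x) (code_le_maxDigit o l _) hb
    (shift_code_le_code_zeroOnes o l x) n

lemma valSeq_shift_code_lt_one {o : OuterCoding} {l : List Gen} (hβ : 1 < β)
    (hb : valSeq β (code o l zeroOnes) < 1) (x : ℕ → Bool) (n : ℕ) :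
    valSeq β (shift n (code o l x)) < 1 := by
  refine lt_of_le_of_lt (valSeq_le_of_seqLe hβ (shift_le (code_le_maxDigit o l x) n)
    (code_le_maxDigit o l _) (fun m => ?_) (shift_code_le_code_zeroOnes o l x n)) hb
  rw [shift_shift]
  exact valSeq_shift_code_le_one hβ hb.le x _

lemma valSeq_code_oneZeros_le_valSeq_shift_code {o : OuterCoding} {l : List Gen} (hβ : 1 < β)
    (hb : valSeq β (code o l zeroOnes) ≤ 1) (x : ℕ → Bool) (n : ℕ) :
    valSeq β (code o l oneZeros) ≤ valSeq β (shift n (code o l x)) :=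
  valSeq_le_of_seqLe hβ (code_le_maxDigit o l _) (shift_le (code_le_maxDigit o l x) n)
    (valSeq_shift_code_le_one hβ hb _) (code_oneZeros_le_shift_code o l x n)

lemma valSeq_code_mem_survivor {o : OuterCoding} {l : List Gen} (hβ : 1 < β)
    (hb : valSeq β (code o l zeroOnes) < 1) (ht : t ≤ valSeq β (code o l oneZeros))
    (x : ℕ → Bool) : valSeq β (code o l x) ∈ survivor β t := by
  refine ⟨⟨valSeq_nonneg hβ _, valSeq_shift_code_lt_one hβ hb x 0⟩, fun n => ?_⟩
  rw [Tbeta_iterate_valSeq hβ (code_le_maxDigit o l x) (valSeq_shift_code_lt_one hβ hb x)]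
  exact ht.trans (valSeq_code_oneZeros_le_valSeq_shift_code hβ hb.le x n)

lemma dimH_survivor_pos {o : OuterCoding} {l : List Gen} (hβ : 1 < β)
    (hb : valSeq β (code o l zeroOnes) < 1) (ht : 0 < t)
    (hta : t ≤ valSeq β (code o l oneZeros)) : 0 < dimH (survivor β t) := by
  let q : ℕ := 2 ^ l.length
  let x : (ℕ → Fin 2) → ℕ → Bool := fun δ => cons false (finTwoEquiv ∘ δ)
  have hq : (β ^ q)⁻¹ < 1 := inv_lt_one_of_one_lt₀ (one_lt_pow₀ hβ (by positivity))
  have tails (δ : ℕ → Fin 2) (n : ℕ) : valSeq β (shift n (code o l (x δ))) ∈ Icc t 1 :=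
    ⟨hta.trans (valSeq_code_oneZeros_le_valSeq_shift_code hβ hb.le _ n),
      valSeq_shift_code_le_one hβ hb.le _ n⟩
  have separated (δ δ' : ℕ → Fin 2) (m : ℕ) (hm : δ m ≠ δ' m) :
      t / β ^ (q * 2) * (β ^ q)⁻¹ ^ m ≤
        dist (valSeq β (code o l (x δ))) (valSeq β (code o l (x δ'))) := by
    have differ : ¬ AgreeUpTo (q * (m + 2)) (code o l (x δ)) (code o l (x δ')) := fun h =>
      hm (finTwoEquiv.injective
        (AgreeUpTo.of_code (u := x δ) (v := x δ') rfl h (m + 1) (Nat.lt_succ_self _)))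
    refine le_of_eq_of_le ?_ (div_pow_le_abs_valSeq_sub hβ ht.le (code_le_maxDigit o l _)
      (code_le_maxDigit o l _) (tails δ) (tails δ') differ)
    rw [inv_pow, ← pow_mul, ← div_eq_mul_inv, div_div, ← pow_add, mul_add, add_comm]
  calc 0 < ENNReal.ofReal (Real.logb ((β ^ q)⁻¹)⁻¹ (2 : ℕ)) :=
        ENNReal.ofReal_pos.mpr (Real.logb_pos ((one_lt_inv₀ (by positivity)).mpr hq) (by simp))
    _ ≤ dimH (range fun δ => valSeq β (code o l (x δ))) :=
        logb_le_dimH_range_of_separated one_lt_two (by positivity) (by positivity) hq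
          fun δ δ' m _ => separated δ δ' m
    _ ≤ dimH (survivor β t) :=
        dimH_mono (range_subset_iff.mpr fun δ => valSeq_code_mem_survivor hβ hb hta (x δ))

lemma survivor_eq_empty (ht : 1 ≤ t) : survivor β t = ∅ :=
  eq_empty_iff_forall_notMem.mpr fun _ hx => ((hx.2 0).trans_lt hx.1.2).not_ge ht

lemma le_tau {a : ℝ} (h : ∀ t, 0 < t → t ≤ a → dimH (survivor β t) ≠ 0) : a ≤ tau β := by
  refine le_csInf ⟨1, one_pos, by rw [survivor_eq_empty le_rfl, dimH_empty]⟩ fun t ht => ?_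
  exact le_of_not_gt fun hlt => h t ht.1 hlt.le ht.2

lemma tau_le {a : ℝ} (ha : 0 ≤ a) (h : ∀ t, a < t → dimH (survivor β t) = 0) : tau β ≤ a :=
  le_of_forall_gt_imp_ge_of_dense fun t ht =>
    csInf_le ⟨0, fun _ hs => hs.1.le⟩ ⟨ha.trans_lt ht, h t ht⟩

lemma valSeq_code_oneZeros_le_tau {o : OuterCoding} {l : List Gen} (hβ : 1 < β)
    (hb : valSeq β (code o l zeroOnes) < 1) : valSeq β (code o l oneZeros) ≤ tau β :=
  le_tau fun _ ht hta => (dimH_survivor_pos hβ hb ht hta).ne'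

end LowerBound

/-! ### Countability of strictly bounded binary sequences -/

/-- The binary sequences all of whose tails that start with `c` lie strictly inside the bound
`K c`. -/
def strictlyBounded (K : Bool → ℕ → Bool) : Set (ℕ → Bool) :=
  {x | ∀ n, LexLt (x n) (shift n x) (K (x n))}

/-- The sequences which may escape desubstitution. -/
def specialSeqs : Set (ℕ → Bool) := range (Function.const ℕ) ∪ range alternating

/-- The bounds which the letters already read impose on the rest `y` of a sequence, when reading
it as a concatenation of blocks of the substitution with expanded letters `g`. -/
def BlockBounded (g : Bool → Bool) (y : ℕ → Bool) : Prop :=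
  ∀ c, g (!c) = true → LexLt c y (alternating (!c))

/-- The `i`-th block of a sequence, read as a concatenation of the blocks `c, !c` with
`g c = true` and `c` with `g c = false`. -/
def contractAt (g : Bool → Bool) : ℕ → (ℕ → Bool) → Bool
  | 0, y => y 0
  | i + 1, y => contractAt g i (if g (y 0) then shift 2 y else shift 1 y)

section StrictlyBounded

variable {K : Bool → ℕ → Bool} {g : Bool → Bool} {c : Bool} {n : ℕ} {u x y : ℕ → Bool}

lemma shift_mem_strictlyBounded (hx : x ∈ strictlyBounded K) (m : ℕ) :
    shift m x ∈ strictlyBounded K := fun n => by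
  rw [shift_shift, shift_apply]
  exact hx (n + m)

lemma countable_setOf_exists_shift_mem {α : Type*} [Countable α] {T : Set (ℕ → α)}
    (hT : T.Countable) : {x : ℕ → α | ∃ n, shift n x ∈ T}.Countable := by
  rw [Set.ofPred_exists]
  refine countable_iUnion fun n => ?_
  refine (((to_countable (univ : Set (Fin n → α))).prod hT).image
    fun p i => if h : i < n then p.1 ⟨i, h⟩ else p.2 (i - n)).mono fun x hx => ?_
  refine ⟨(fun i => x i, shift n x), ⟨mem_univ _, hx⟩, funext fun i => ?_⟩
  by_cases hi : i < n
  · simp [hi]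
  · simp [hi, Nat.sub_add_cancel (not_lt.mp hi)]

lemma exists_expand_eq {P : (ℕ → Bool) → Prop}
    (h1 : ∀ y, P y → g (y 0) = true → y 1 = !y 0 ∧ P (shift 2 y))
    (h2 : ∀ y, P y → g (y 0) = false → P (shift 1 y)) (hy : P y) : ∃ x, expand g x = y := by
  have unfold_contract (y : ℕ → Bool) : (fun m => contractAt g m y) =
      cons (y 0) (fun m => contractAt g m (if g (y 0) then shift 2 y else shift 1 y)) := by
    funext i
    cases i <;> rfl
  refine ⟨fun m => contractAt g m y, funext fun i => ?_⟩
  induction i using Nat.strong_induction_on generalizing y with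
  | _ i ih =>
    rw [unfold_contract]
    cases hg : g (y 0)
    · rw [expand_cons_of_false hg]
      cases i with
      | zero => rfl
      | succ i => exact ih i i.lt_succ_self (h2 y hy hg)
    · rw [expand_cons_of_true hg]
      obtain ⟨hy1, hP⟩ := h1 y hy hg
      match i with
      | 0 => rfl
      | 1 => exact hy1.symm
      | i + 2 => exact ih i (by lia) hP

lemma exists_shift_expand_eq (g : Bool → Bool) (x : ℕ → Bool) (m : ℕ) :
    ∃ n, shift n (expand g x) = expand g (shift m x) := by
  induction m with
  | zero => exact ⟨0, rfl⟩
  | succ m ih =>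
    obtain ⟨n, hn⟩ := ih
    rw [← cons_apply_shift m x] at hn
    cases hg : g (x m)
    · exact ⟨1 + n, by rw [← shift_shift, hn, expand_cons_of_false hg, shift_one_cons]⟩
    · exact ⟨2 + n, by rw [← shift_shift, hn, expand_cons_of_true hg]; rfl⟩

lemma mem_strictlyBounded_of_expand_mem
    (h : expand g x ∈ strictlyBounded fun c => expand g (K c)) : x ∈ strictlyBounded K := by
  intro m
  obtain ⟨n, hn⟩ := exists_shift_expand_eq g x m
  have h0 : expand g x n = x m := by simpa using congrFun hn 0
  have bound := h n
  rw [hn, h0] at bound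
  exact bound.of_expand

lemma Framed.lexLe_wideFrame (hK : Framed K) (c : Bool) : LexLe c (K c) (wideFrame c) := by
  rw [eq_cons_of_head (hK c).1]
  exact (lexLe_const c _).cons c

lemma strictlyBounded_expand_subset (hK : Framed K) (g : Bool → Bool) :
    (strictlyBounded fun c => expand g (K c)) ⊆ strictlyBounded fun c => expand g (wideFrame c) :=
  fun _ hx n => (hx n).trans_le ((hK.lexLe_wideFrame _).expand g)

lemma LexLt.of_cons_alternating (h : LexLt c (cons (!c) u) (alternating (!c))) :
    u 0 = c ∧ LexLt c (shift 1 u) (alternating (!c)) := by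
  rw [alternating_eq_cons, Bool.not_not] at h
  have h' : LexLt c u (alternating c) := h.of_cons
  have h0 : u 0 = c := by
    by_contra hne
    exact h'.asymm (lexLt_of_head rfl (Bool.eq_not_of_ne hne))
  rw [eq_cons_of_head h0, alternating_eq_cons] at h'
  exact ⟨h0, h'.of_cons⟩

lemma lexLt_alternating_of_expanded (hx : x ∈ strictlyBounded fun c => expand g (wideFrame c))
    (hg : g (x n) = true) (hg' : g (!x n) = true) (hn : x (n + 1) = !x n) :
    LexLt (x n) (shift (n + 2) x) (alternating (!x n)) := by
  have h : LexLt (x n) (shift n x) (expand g (cons (x n) (Function.const ℕ (!x n)))) := hx n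
  rw [← cons_apply_shift n x, ← cons_apply_shift (n + 1) x, hn,
    expand_cons_of_true hg, expand_const_of_true hg'] at h
  exact h.of_cons.of_cons

lemma lexLt_alternating_of_not_expanded (hx : x ∈ strictlyBounded fun c => expand g (wideFrame c))
    (hg : g (x n) = false) (hg' : g (!x n) = true) :
    LexLt (x n) (shift (n + 1) x) (alternating (!x n)) := by
  have h : LexLt (x n) (shift n x) (expand g (cons (x n) (Function.const ℕ (!x n)))) := hx n
  rw [← cons_apply_shift n x, expand_cons_of_false hg, expand_const_of_true hg'] at h
  exact h.of_cons

protected lemma BlockBounded.shift_two (hx : x ∈ strictlyBounded fun c => expand g (wideFrame c))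
    (h : BlockBounded g x) (hg : g (x 0) = true) : x 1 = !x 0 ∧ BlockBounded g (shift 2 x) := by
  have h0 := h (!x 0) (by rwa [Bool.not_not])
  rw [← cons_head x, cons_zero] at h0
  obtain ⟨h1, h2⟩ := LexLt.of_cons_alternating (u := shift 1 x) (by rwa [Bool.not_not] at h0 ⊢)
  refine ⟨h1, fun c hc => ?_⟩
  by_cases hcx : c = x 0
  · subst hcx
    exact lexLt_alternating_of_expanded hx hg hc h1
  · rw [Bool.eq_not_of_ne hcx]
    exact h2

protected lemma BlockBounded.shift_one (hx : x ∈ strictlyBounded fun c => expand g (wideFrame c))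
    (hg : g (x 0) = false) : BlockBounded g (shift 1 x) := by
  intro c hc
  have hcx : c = x 0 := by
    by_contra hne
    rw [Bool.eq_not_of_ne hne, Bool.not_not, hg] at hc
    cases hc
  subst hcx
  exact lexLt_alternating_of_not_expanded hx hg hc

lemma blockBounded_shift (hx : x ∈ strictlyBounded fun c => expand g (wideFrame c))
    (h1 : x (n + 1) = !x n) (h2 : x (n + 2) = !x n) : BlockBounded g (shift (n + 2) x) := by
  intro c hc
  by_cases hcx : c = x n
  · subst hcx
    cases hg : g (x n)
    · have h := lexLt_alternating_of_not_expanded hx hg hc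
      rw [← cons_apply_shift (n + 1), h1] at h
      have h2' : x (n + 2) = x n := by
        simpa [add_comm, add_left_comm] using h.of_cons_alternating.1
      exact absurd (h2.symm.trans h2') (Bool.not_ne_self _)
    · exact lexLt_alternating_of_expanded hx hg hc h1
  · rw [Bool.eq_not_of_ne hcx]
    exact lexLt_of_head (by simpa [add_comm] using h2) (alternating_eq_cons _ ▸ rfl)

lemma exists_shift_mem_specialSeqs_or (x : ℕ → Bool) :
    (∃ n, shift n x ∈ specialSeqs) ∨ ∃ n, x (n + 1) = !x n ∧ x (n + 2) = !x n := by
  refine or_iff_not_imp_right.mpr fun no_pattern => ?_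
  push Not at no_pattern
  by_cases hch : ∃ n, x (n + 1) = !x n
  · obtain ⟨n, hn⟩ := hch
    have step (i : ℕ) : x (n + i + 1) = !x (n + i) := by
      induction i with
      | zero => exact hn
      | succ i ih =>
        have h := no_pattern (n + i) ih
        rw [← ih] at h
        exact Bool.eq_not_of_ne h
    refine ⟨n, Or.inr ⟨x n, (eq_alternating_of_eq_cons (funext fun i => ?_)).symm⟩⟩
    match i with
    | 0 => simp
    | 1 => simpa [add_comm] using hn
    | i + 2 =>
      have h := step (i + 1)
      rw [← add_assoc, step i, Bool.not_not] at h
      change x (i + 2 + n) = x (i + n)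
      rw [add_right_comm, add_comm i n]
      exact h
  · push Not at hch
    refine ⟨0, Or.inl ⟨x 0, funext fun i => ?_⟩⟩
    induction i with
    | zero => rfl
    | succ i ih => exact ih.trans (Bool.not_not_eq.mp (hch i).symm)

lemma exists_shift_mem_specialSeqs_or_expand_eq
    (hx : x ∈ strictlyBounded fun c => expand g (wideFrame c)) :
    ∃ n, shift n x ∈ specialSeqs ∨ ∃ y, expand g y = shift n x := by
  obtain ⟨n, hn⟩ | ⟨n, h1, h2⟩ := exists_shift_mem_specialSeqs_or x
  · exact ⟨n, Or.inl hn⟩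
  · refine ⟨n + 2, Or.inr (exists_expand_eq
      (P := fun y => y ∈ strictlyBounded (fun c => expand g (wideFrame c)) ∧
        BlockBounded g y)
      (fun y hy hg => ?_) (fun y hy hg => ?_)
      ⟨shift_mem_strictlyBounded hx _, blockBounded_shift hx h1 h2⟩)⟩
    · exact (hy.2.shift_two hy.1 hg).imp_right fun h => ⟨shift_mem_strictlyBounded hy.1 2, h⟩
    · exact ⟨shift_mem_strictlyBounded hy.1 1, BlockBounded.shift_one hy.1 hg⟩

lemma countable_specialSeqs : specialSeqs.Countable :=
  (countable_range _).union (countable_range _)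

lemma countable_strictlyBounded_expand (hK : Framed K) (g : Bool → Bool)
    (h : (strictlyBounded K).Countable) :
    (strictlyBounded fun c => expand g (K c)).Countable := by
  refine (countable_setOf_exists_shift_mem
    (countable_specialSeqs.union (h.image (expand g)))).mono fun x hx => ?_
  obtain ⟨n, hn | ⟨y, hy⟩⟩ :=
    exists_shift_mem_specialSeqs_or_expand_eq (strictlyBounded_expand_subset hK g hx)
  · exact ⟨n, Or.inl hn⟩
  · refine ⟨n, Or.inr ⟨y, mem_strictlyBounded_of_expand_mem (g := g) ?_, hy⟩⟩
    rw [hy]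
    exact shift_mem_strictlyBounded hx n

/-- The frame `0 1^∞`, `1 0 1^∞`. -/
def narrowFrame (c : Bool) : ℕ → Bool := bif c then oneZeroOnes else zeroOnes

lemma framed_narrowFrame : Framed narrowFrame := by
  intro c
  cases c <;> exact ⟨rfl, rfl⟩

lemma not_lexLt_const (c : Bool) (u : ℕ → Bool) : ¬ LexLt c u (Function.const ℕ c) :=
  fun ⟨_, _, _, h⟩ => Bool.not_ne_self c h.symm

lemma countable_strictlyBounded_narrowFrame : (strictlyBounded narrowFrame).Countable := by
  refine (countable_setOf_exists_shift_mem countable_specialSeqs).mono fun x hx => ?_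
  have step (n : ℕ) (hn : x n = true) : x (n + 1) = true := by
    by_contra hne
    have h := hx n
    rw [← cons_apply_shift n x, ← cons_apply_shift (n + 1) x, Bool.eq_false_of_not_eq_true hne,
      hn] at h
    exact not_lexLt_const _ _ h.of_cons.of_cons
  by_cases hex : ∃ n, x n = true
  · obtain ⟨n, hn⟩ := hex
    refine ⟨n, Or.inl ⟨true, funext fun i => ?_⟩⟩
    induction i with
    | zero => simpa using hn.symm
    | succ i ih =>
      rw [shift_apply, add_right_comm]
      exact (step _ ih.symm).symm
  · push Not at hex
    exact ⟨0, Or.inl ⟨false, funext fun n => (Bool.eq_false_of_not_eq_true (hex n)).symm⟩⟩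

lemma countable_strictlyBounded_expandList (l : List Gen) :
    (strictlyBounded fun c => expandList l (narrowFrame c)).Countable := by
  induction l with
  | nil => exact countable_strictlyBounded_narrowFrame
  | cons a l ih =>
    exact countable_strictlyBounded_expand (framed_narrowFrame.expandList l) a.flag ih

end StrictlyBounded

/-! ### Countability of strictly bounded digit sequences -/

/-- Digit sequences all of whose tails lie strictly between the codings of the frame `K`. -/
def strictlyBetween (o : OuterCoding) (K : Bool → ℕ → Bool) : Set (ℕ → ℕ) :=
  {z | ∀ n, seqLt (o.encode (K true)) (shift n z) ∧ seqLt (shift n z) (o.encode (K false))}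

section StrictlyBetween

variable {o : OuterCoding} {k : ℕ} {K : Bool → ℕ → Bool} {u v x : ℕ → Bool} {z z' : ℕ → ℕ}

lemma seqLt_asymm (h : seqLt z z') : ¬ seqLt z' z := lt_asymm (seqLt_iff_toLex_lt.mp h)

lemma apply_zero_le_of_seqLt (h : seqLt z z') : z 0 ≤ z' 0 := by
  obtain ⟨n, hn, h⟩ := h
  cases n with
  | zero => exact h.le
  | succ n => exact (hn 0 n.succ_pos).le

lemma seqLt_iff_shift_one (h0 : z 0 = z' 0) : seqLt z z' ↔ seqLt (shift 1 z) (shift 1 z') := by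
  constructor
  · rintro ⟨n, hn, h⟩
    cases n with
    | zero => exact absurd h0 h.ne
    | succ n => exact ⟨n, AgreeUpTo.tail hn, h⟩
  · rintro ⟨n, hn, h⟩
    exact ⟨n + 1, agreeUpTo_succ_iff.mpr ⟨h0, hn⟩, h⟩

protected lemma LexLt.of_encode (h0 : u 0 = v 0) (h : seqLt (o.encode u) (o.encode v)) :
    LexLt false u v := by
  rcases lexLt_trichotomy false u v with h' | rfl | h'
  exacts [h', absurd h (seqLt_asymm h), absurd h (seqLt_asymm (h'.encode o h0.symm))]

lemma mem_strictlyBounded_of_encode_mem (hK : Framed K) (hx : o.encode x ∈ strictlyBetween o K) :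
    x ∈ strictlyBounded K := by
  intro n
  obtain ⟨lower, upper⟩ := hx n
  rw [o.shift_encode] at lower upper
  cases hc : x n
  · exact LexLt.of_encode (by simpa [hc] using (hK false).1.symm) upper
  · exact lexLt_not_iff.mpr (LexLt.of_encode (by simpa [hc] using (hK true).1) lower)

lemma strictlyBetween_subset_wideFrame (hK : Framed K) :
    strictlyBetween o K ⊆ strictlyBetween o wideFrame := by
  intro z hz n
  have lower : seqLe (o.encode (wideFrame true)) (o.encode (K true)) :=
    LexLe.encode o (hK true).1.symm (lexLe_not_iff (c := false).mp (hK.lexLe_wideFrame true))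
  have upper : seqLe (o.encode (K false)) (o.encode (wideFrame false)) :=
    LexLe.encode o (hK false).1 (hK.lexLe_wideFrame false)
  obtain ⟨hlower, hupper⟩ := hz n
  rw [seqLe_iff_toLex_le] at lower upper
  rw [seqLt_iff_toLex_lt] at hlower hupper
  exact ⟨lower.trans_lt hlower, hupper.trans_le upper⟩

lemma exists_encode_raise_eq (hz : z ∈ strictlyBetween (.raise k) wideFrame) :
    ∃ x, (OuterCoding.raise k).encode x = z := by
  refine ⟨cons false fun n => decide (z n = k + 1), funext fun n => ?_⟩
  have lower : k ≤ z n := by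
    simpa [OuterCoding.encode, OuterCoding.digit, wideFrame] using apply_zero_le_of_seqLt (hz n).1
  have upper : z n ≤ k + 1 := by
    simpa [OuterCoding.encode, OuterCoding.digit, wideFrame] using apply_zero_le_of_seqLt (hz n).2
  simp only [OuterCoding.encode, OuterCoding.digit, cons_succ]
  by_cases h : z n = k + 1
  · simp [h]
  · simp only [h, decide_false, Bool.toNat_false]
    lia

lemma encode_diff_wideFrame_true (k : ℕ) :
    (OuterCoding.diff k).encode (wideFrame true) = cons k (Function.const ℕ (k + 1)) := by
  funext i
  cases i <;> rfl

lemma encode_diff_wideFrame_false (k : ℕ) :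
    (OuterCoding.diff k).encode (wideFrame false) = cons (k + 2) (Function.const ℕ (k + 1)) := by
  funext i
  cases i <;> rfl

-- The letter at `n` is read off by comparing the tail at `n` with `(k + 1)^∞`.
open Classical in
lemma exists_encode_diff_eq (hz : z ∈ strictlyBetween (.diff k) wideFrame) :
    ∃ x, (OuterCoding.diff k).encode x = z := by
  let c : ℕ → ℕ := Function.const ℕ (k + 1)
  refine ⟨fun n => decide (seqLt (shift n z) c), funext fun n => ?_⟩
  obtain ⟨lower, upper⟩ := hz n
  rw [encode_diff_wideFrame_true] at lower
  rw [encode_diff_wideFrame_false] at upper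
  have hlower : k ≤ z n := by simpa using apply_zero_le_of_seqLt lower
  have hupper : z n ≤ k + 2 := by simpa using apply_zero_le_of_seqLt upper
  simp only [OuterCoding.encode, OuterCoding.digit]
  obtain h | h | h : z n = k ∨ z n = k + 1 ∨ z n = k + 2 := by lia
  · have current : seqLt (shift n z) c := ⟨0, by simp, by simp [c, h]⟩
    have next : ¬ seqLt (shift (n + 1) z) c := by
      rw [seqLt_iff_shift_one (by simp [h]), shift_shift, add_comm 1] at lower
      exact seqLt_asymm lower
    simp [current, next, h]
  · have agree : seqLt (shift n z) c ↔ seqLt (shift (n + 1) z) c := by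
      rw [seqLt_iff_shift_one (by simp [c, h]), shift_shift, add_comm 1]
      rfl
    by_cases next : seqLt (shift (n + 1) z) c <;> simp [agree, next, h]
  · have current : ¬ seqLt (shift n z) c := fun hlt => by
      have := apply_zero_le_of_seqLt hlt
      simp [c, h] at this
    have next : seqLt (shift (n + 1) z) c := by
      rw [seqLt_iff_shift_one (by simp [h]), shift_shift, add_comm 1] at upper
      exact upper
    simp [current, next, h]

lemma countable_strictlyBetween (o : OuterCoding) (hK : Framed K)
    (h : (strictlyBounded K).Countable) : (strictlyBetween o K).Countable := by
  refine (h.image o.encode).mono fun z hz => ?_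
  obtain ⟨x, rfl⟩ : ∃ x, o.encode x = z := by
    cases o with
    | raise k => exact exists_encode_raise_eq (strictlyBetween_subset_wideFrame hK hz)
    | diff k => exact exists_encode_diff_eq (strictlyBetween_subset_wideFrame hK hz)
  exact ⟨x, mem_strictlyBounded_of_encode_mem hK hz, rfl⟩

lemma tau_le_valSeq_code_oneZeroOnes {β : ℝ} {l : List Gen} (hβ : 1 < β)
    (hb : 1 ≤ valSeq β (code o l zeroOnes)) : tau β ≤ valSeq β (code o l oneZeroOnes) := by
  refine tau_le (valSeq_nonneg hβ _) fun t ht => dimH_countable ?_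
  refine ((countable_strictlyBetween o (framed_narrowFrame.expandList l)
    (countable_strictlyBounded_expandList l)).image (valSeq β)).mono fun x hx => ?_
  refine ⟨greedyDigits β x, fun n => ⟨?_, ?_⟩, ?_⟩
  · exact seqLt_shift_greedyDigits hβ hx (code_le_maxDigit o l oneZeroOnes) ht n
  · exact shift_greedyDigits_seqLt hβ hx.1 (code_le_maxDigit o l zeroOnes)
      (shift_code_le_code_zeroOnes o l zeroOnes) hb n
  · exact (Tbeta_iterate_eq_valSeq_greedyDigits hβ hx.1 0).symm

end StrictlyBetween

/-! ### The critical value between the bounds of a node -/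

section Bounds

variable {β r : ℝ} {o o' : OuterCoding} {l l' : List Gen} {u v x : ℕ → Bool} {a : Gen}

lemma code_append_replicate (h : expand a.flag x = x) (o : OuterCoding) (l : List Gen) (n : ℕ) :
    code o (l ++ List.replicate n a) x = code o l x := by
  rw [code_append, expandList_replicate h]

lemma abs_valSeq_code_sub_le (hβ : 1 < β) (h : AgreeUpTo 2 u v) (hu : u 1 = !u 0)
    (o : OuterCoding) {n : ℕ} (hn : n ≤ l.length) :
    |valSeq β (code o l u) - valSeq β (code o l v)| ≤ o.maxDigit / (β - 1) / β ^ n := by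
  refine (abs_valSeq_sub_le hβ (code_le_maxDigit o l u) (code_le_maxDigit o l v)
    (h.code o l hu)).trans ?_
  have : 0 < β - 1 := sub_pos.mpr hβ
  gcongr
  · exact hβ.le
  · exact hn.trans (Nat.le_succ _)

lemma tendsto_valSeq_code_sub (hβ : 1 < β) (h : AgreeUpTo 2 u v) (hu : u 1 = !u 0)
    (o : OuterCoding) {ls : ℕ → List Gen} (hls : ∀ n, n ≤ (ls n).length) :
    Tendsto (fun n => valSeq β (code o (ls n) u) - valSeq β (code o (ls n) v)) atTop (𝓝 0) :=
  squeeze_zero_norm (fun n => abs_valSeq_code_sub_le hβ h hu o (hls n))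
    (tendsto_const_nhds.div_atTop (tendsto_pow_atTop_atTop_of_one_lt hβ))

lemma tendsto_valSeq_code_replicate (hβ : 1 < β) (h : AgreeUpTo 2 u v) (hu : u 1 = !u 0)
    (ha : expand a.flag u = u) (o : OuterCoding) (l : List Gen) :
    Tendsto (fun n => valSeq β (code o (l ++ List.replicate n a) v)) atTop
      (𝓝 (valSeq β (code o l u))) := by
  have := (tendsto_valSeq_code_sub hβ h hu o (ls := fun n => l ++ List.replicate n a)
    fun n => by simp).const_sub (valSeq β (code o l u))
  simpa only [code_append_replicate ha, sub_sub_cancel, sub_zero] using this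

lemma tendsto_valSeq_code_replicate_A_zeroOnes (hβ : 1 < β) (o : OuterCoding) (l : List Gen) :
    Tendsto (fun n => valSeq β (code o (l ++ List.replicate n Gen.A) zeroOnes)) atTop
      (𝓝 (valSeq β (code o l zeroOneZeros))) :=
  tendsto_valSeq_code_replicate hβ agreeUpTo_two_zeroOneZeros_zeroOnes rfl expand_A_zeroOneZeros o l

lemma tendsto_valSeq_code_replicate_A_oneZeroOnes (hβ : 1 < β) (o : OuterCoding) (l : List Gen) :
    Tendsto (fun n => valSeq β (code o (l ++ List.replicate n Gen.A) oneZeroOnes)) atTop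
      (𝓝 (valSeq β (code o l oneZeros))) :=
  tendsto_valSeq_code_replicate hβ agreeUpTo_two_oneZeros_oneZeroOnes rfl expand_A_oneZeros o l

lemma tendsto_valSeq_code_replicate_B_oneZeros (hβ : 1 < β) (o : OuterCoding) (l : List Gen) :
    Tendsto (fun n => valSeq β (code o (l ++ List.replicate n Gen.B) oneZeros)) atTop
      (𝓝 (valSeq β (code o l oneZeroOnes))) :=
  tendsto_valSeq_code_replicate hβ agreeUpTo_two_oneZeros_oneZeroOnes.symm rfl
    expand_B_oneZeroOnes o l

lemma valSeq_code_lt_valSeq_code_zeroOnes (hβ : 1 < β) (hx : x 0 = false)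
    (h : LexLt false x zeroOnes) (hb : valSeq β (code o l zeroOnes) ≤ 1) :
    valSeq β (code o l x) < valSeq β (code o l zeroOnes) :=
  valSeq_lt_of_seqLt hβ (code_le_maxDigit o l x) (code_le_maxDigit o l _)
    (valSeq_shift_code_le_one hβ hb x) (h.code o l hx)
    (frequently_code_ne_zero o l frequently_zeroOnes_eq_true)

lemma one_lt_valSeq_code_zeroOnes (hβ : 1 < β) (hb : valSeq β (code o l zeroOneZeros) = 1) :
    1 < valSeq β (code o l zeroOnes) := by
  rw [← hb]
  exact valSeq_lt_of_seqLt hβ (code_le_maxDigit o l _) (code_le_maxDigit o l _)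
    (valSeq_shift_le_one hβ (code_le_maxDigit o l _) (code_le_maxDigit o l _) hb.le
      (shift_code_zeroOneZeros_le o l))
    (zeroOneZeros_lexLt_zeroOnes.code o l rfl)
    (frequently_code_ne_zero o l frequently_zeroOnes_eq_true)

lemma valSeq_code_oneZeroOnes_le_tau (hβ : 1 < β) (hb : valSeq β (code o l zeroOnes) ≤ 1) :
    valSeq β (code o l oneZeroOnes) ≤ tau β := by
  refine le_of_tendsto' (tendsto_valSeq_code_replicate_B_oneZeros hβ o l) fun n => ?_
  have hb' : valSeq β (code o (l ++ List.replicate n Gen.B) zeroOnes) ≤ 1 := by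
    rwa [code_append_replicate expand_B_zeroOnes]
  have child_lt : valSeq β (code o (l ++ List.replicate n Gen.B ++ [Gen.A]) zeroOnes) < 1 := by
    rw [code_concat, expand_A_zeroOnes]
    exact (valSeq_code_lt_valSeq_code_zeroOnes hβ rfl alternating_lexLt_zeroOnes hb').trans_le hb'
  have child_le := valSeq_code_oneZeros_le_tau hβ child_lt
  rwa [code_concat, expand_A_oneZeros] at child_le

lemma valSeq_code_oneZeros_le_tau_of_zeroOneZeros_lt (hβ : 1 < β)
    (hb : valSeq β (code o l zeroOneZeros) < 1) : valSeq β (code o l oneZeros) ≤ tau β := by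
  obtain ⟨n, hn⟩ :=
    ((tendsto_valSeq_code_replicate_A_zeroOnes hβ o l).eventually_lt_const hb).exists
  have descendant_le := valSeq_code_oneZeros_le_tau hβ hn
  rwa [code_append_replicate expand_A_oneZeros] at descendant_le

lemma tau_le_valSeq_code_oneZeros (hβ : 1 < β) (hb : 1 ≤ valSeq β (code o l zeroOneZeros)) :
    tau β ≤ valSeq β (code o l oneZeros) := by
  refine ge_of_tendsto' (tendsto_valSeq_code_replicate_A_oneZeroOnes hβ o l) fun n => ?_
  obtain ⟨β', hββ', hβ'⟩ := exists_base_ge_valSeq_eq_one hβ (code_le_maxDigit o l _) hb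
  rw [← code_append_replicate expand_A_zeroOneZeros o l n] at hβ'
  exact tau_le_valSeq_code_oneZeroOnes hβ
    ((one_lt_valSeq_code_zeroOnes (hβ.trans_le hββ') hβ').le.trans
      (valSeq_le_of_base_le hβ hββ' (code_le_maxDigit o _ _)))

lemma tau_eq_valSeq_code_oneZeroOnes (hβ : 1 < β) (hb : valSeq β (code o l zeroOnes) = 1) :
    tau β = valSeq β (code o l oneZeroOnes) :=
  le_antisymm (tau_le_valSeq_code_oneZeroOnes hβ hb.ge) (valSeq_code_oneZeroOnes_le_tau hβ hb.le)

/-! ### One-sided limits of the critical value -/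

lemma eventually_valSeq_code_lt (hβ : 1 < β) (h : valSeq β (code o l x) < r) :
    ∀ᶠ b in 𝓝 β, valSeq b (code o l x) < r :=
  (continuousAt_valSeq hβ (code_le_maxDigit o l x)).eventually_lt_const h

lemma eventually_lt_valSeq_code (hβ : 1 < β) (h : r < valSeq β (code o l x)) :
    ∀ᶠ b in 𝓝 β, r < valSeq b (code o l x) :=
  (continuousAt_valSeq hβ (code_le_maxDigit o l x)).eventually_const_lt h

lemma tendsto_tau_right (hβ : 1 < β) (hb : valSeq β (code o l zeroOneZeros) = 1) :
    Tendsto tau (𝓝[>] β) (𝓝 (valSeq β (code o l oneZeros))) := by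
  refine tendsto_order.mpr ⟨fun r hr => ?_, fun r hr => ?_⟩
  · have nonzero : ∃ i, code o l zeroOneZeros i ≠ 0 := by
      by_contra! h
      simp [valSeq, h] at hb
    filter_upwards [nhdsWithin_le_nhds (eventually_lt_valSeq_code hβ hr), self_mem_nhdsWithin]
      with b hrb (hb' : β < b)
    exact hrb.trans_le (valSeq_code_oneZeros_le_tau_of_zeroOneZeros_lt (hβ.trans hb')
      ((valSeq_lt_of_base_lt hβ hb' (code_le_maxDigit o l _) nonzero).trans_eq hb))
  · obtain ⟨n, hn⟩ :=
      ((tendsto_valSeq_code_replicate_A_oneZeroOnes hβ o l).eventually_lt_const hr).exists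
    rw [← code_append_replicate expand_A_zeroOneZeros o l n] at hb
    filter_upwards [nhdsWithin_le_nhds (eventually_lt_valSeq_code hβ
        (one_lt_valSeq_code_zeroOnes hβ hb)),
      nhdsWithin_le_nhds (eventually_valSeq_code_lt hβ hn), self_mem_nhdsWithin]
      with b h1 hr (hb' : β < b)
    exact (tau_le_valSeq_code_oneZeroOnes (hβ.trans hb') h1.le).trans_lt hr

lemma tendsto_tau_left (hβ : 1 < β) (hb : valSeq β (code o l zeroOnes) = 1) :
    Tendsto tau (𝓝[<] β) (𝓝 (valSeq β (code o l oneZeroOnes))) := by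
  refine tendsto_order.mpr ⟨fun r hr => ?_, fun r hr => ?_⟩
  · obtain ⟨n, hn⟩ :=
      ((tendsto_valSeq_code_replicate_B_oneZeros hβ o l).eventually_const_lt hr).exists
    rw [← code_append_replicate expand_B_zeroOnes o l n] at hb
    have lt_one := valSeq_code_lt_valSeq_code_zeroOnes hβ rfl zeroOneZeros_lexLt_zeroOnes hb.le
    rw [hb] at lt_one
    filter_upwards [nhdsWithin_le_nhds (eventually_valSeq_code_lt hβ lt_one),
      nhdsWithin_le_nhds (eventually_lt_valSeq_code hβ hn),
      nhdsWithin_le_nhds (Ioi_mem_nhds hβ)] with b h1 hr hb'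
    exact hr.trans_le (valSeq_code_oneZeros_le_tau_of_zeroOneZeros_lt hb' h1)
  · filter_upwards [nhdsWithin_le_nhds (eventually_valSeq_code_lt hβ hr), self_mem_nhdsWithin,
      nhdsWithin_le_nhds (Ioi_mem_nhds hβ)] with b hr (hbβ : b < β) hb'
    exact (tau_le_valSeq_code_oneZeroOnes hb'
      (hb.ge.trans (valSeq_le_of_base_le hb' hbβ.le (code_le_maxDigit o l _)))).trans_lt hr

lemma tau_eq_of_gap (hβ : 1 < β) (ha : code o l oneZeroOnes = code o' l' oneZeros)
    (h1 : valSeq β (code o l zeroOnes) ≤ 1) (h2 : 1 ≤ valSeq β (code o' l' zeroOneZeros)) :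
    tau β = valSeq β (code o l oneZeroOnes) :=
  le_antisymm (ha ▸ tau_le_valSeq_code_oneZeros hβ h2) (valSeq_code_oneZeroOnes_le_tau hβ h1)

lemma tendsto_tau_left_of_gap (hβ : 1 < β) (ha : code o l oneZeroOnes = code o' l' oneZeros)
    (h1 : valSeq β (code o l zeroOnes) ≤ 1) (h2 : 1 ≤ valSeq β (code o' l' zeroOneZeros)) :
    Tendsto tau (𝓝[<] β) (𝓝 (valSeq β (code o l oneZeroOnes))) := by
  rcases h1.lt_or_eq with h1 | h1
  · refine Tendsto.congr' ?_
      ((continuousAt_valSeq hβ (code_le_maxDigit o l _)).mono_left nhdsWithin_le_nhds)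
    filter_upwards [nhdsWithin_le_nhds (eventually_valSeq_code_lt hβ h1), self_mem_nhdsWithin,
      nhdsWithin_le_nhds (Ioi_mem_nhds hβ)] with b h1 (hbβ : b < β) hb
    exact (tau_eq_of_gap hb ha h1.le
      (h2.trans (valSeq_le_of_base_le hb hbβ.le (code_le_maxDigit o' l' _)))).symm
  · exact tendsto_tau_left hβ h1

lemma tendsto_tau_right_of_gap (hβ : 1 < β) (ha : code o l oneZeroOnes = code o' l' oneZeros)
    (h1 : valSeq β (code o l zeroOnes) ≤ 1) (h2 : 1 ≤ valSeq β (code o' l' zeroOneZeros)) :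
    Tendsto tau (𝓝[>] β) (𝓝 (valSeq β (code o l oneZeroOnes))) := by
  rcases h2.lt_or_eq with h2 | h2
  · refine Tendsto.congr' ?_
      ((continuousAt_valSeq hβ (code_le_maxDigit o l _)).mono_left nhdsWithin_le_nhds)
    filter_upwards [nhdsWithin_le_nhds (eventually_lt_valSeq_code hβ h2), self_mem_nhdsWithin]
      with b h2 (hb : β < b)
    exact (tau_eq_of_gap (hβ.trans hb) ha
      ((valSeq_le_of_base_le hβ hb.le (code_le_maxDigit o l _)).trans h1) h2.le).symm
  · rw [ha]
    exact tendsto_tau_right hβ h2.symm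

lemma continuousAt_tau_of_gap (hβ : 1 < β) (ha : code o l oneZeroOnes = code o' l' oneZeros)
    (h1 : valSeq β (code o l zeroOnes) ≤ 1) (h2 : 1 ≤ valSeq β (code o' l' zeroOneZeros)) :
    ContinuousAt tau β := by
  rw [continuousAt_iff_continuous_left'_right', ContinuousWithinAt, ContinuousWithinAt,
    tau_eq_of_gap hβ ha h1 h2]
  exact ⟨tendsto_tau_left_of_gap hβ ha h1 h2, tendsto_tau_right_of_gap hβ ha h1 h2⟩

/-! ### Continuity of the critical value -/

/-- The base `β` lies in the interior of the interval of bases belonging to the node `(o, l)`. -/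
def Interior (β : ℝ) (o : OuterCoding) (l : List Gen) : Prop :=
  valSeq β (code o l zeroOneZeros) < 1 ∧ 1 < valSeq β (code o l zeroOnes)

lemma continuousAt_tau_of_interior (hβ : 1 < β) (o : OuterCoding)
    (h : ∀ n, ∃ l, n ≤ l.length ∧ Interior β o l) : ContinuousAt tau β := by
  choose ls hls interior using h
  have lower (n : ℕ) : valSeq β (code o (ls n) oneZeros) ≤ tau β :=
    valSeq_code_oneZeros_le_tau_of_zeroOneZeros_lt hβ (interior n).1
  have upper (n : ℕ) : tau β ≤ valSeq β (code o (ls n) oneZeroOnes) :=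
    tau_le_valSeq_code_oneZeroOnes hβ (interior n).2.le
  have gap := tendsto_valSeq_code_sub hβ agreeUpTo_two_oneZeros_oneZeroOnes rfl o hls
  refine tendsto_order.mpr ⟨fun r hr => ?_, fun r hr => ?_⟩
  · obtain ⟨n, hn⟩ := (gap.eventually_const_lt (sub_neg.mpr hr)).exists
    have hrn : r < valSeq β (code o (ls n) oneZeros) := by linarith [upper n]
    filter_upwards [eventually_lt_valSeq_code hβ hrn,
      eventually_valSeq_code_lt hβ (interior n).1, Ioi_mem_nhds hβ] with b hr h1 hb
    exact hr.trans_le (valSeq_code_oneZeros_le_tau_of_zeroOneZeros_lt hb h1)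
  · obtain ⟨n, hn⟩ := (gap.eventually_const_lt (sub_neg.mpr hr)).exists
    have hrn : valSeq β (code o (ls n) oneZeroOnes) < r := by linarith [lower n]
    filter_upwards [eventually_valSeq_code_lt hβ hrn,
      eventually_lt_valSeq_code hβ (interior n).2, Ioi_mem_nhds hβ] with b hr h1 hb
    exact (tau_le_valSeq_code_oneZeroOnes hb h1.le).trans_lt hr

lemma Interior.exists_child (h : Interior β o l) (hβ : 1 < β) (hcont : ¬ ContinuousAt tau β)
    (hM : valSeq β (code o (l ++ [Gen.M]) zeroOnes) ≠ 1) : ∃ a, Interior β o (l ++ [a]) := by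
  rcases lt_or_ge 1 (valSeq β (code o (l ++ [Gen.A]) zeroOnes)) with hA | hA
  · refine ⟨Gen.A, ?_, hA⟩
    rw [code_concat, expand_A_zeroOneZeros]
    exact h.1
  rcases lt_or_ge (valSeq β (code o (l ++ [Gen.M]) zeroOneZeros)) 1 with hM0 | hM0
  · rcases hM.lt_or_gt with hM1 | hM1
    · refine ⟨Gen.B, ?_, ?_⟩
      · rwa [code_concat, ← expand_M_zeroOnes, ← code_concat]
      · rw [code_concat, expand_B_zeroOnes]
        exact h.2
    · exact ⟨Gen.M, hM0, hM1⟩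
  · exact absurd (continuousAt_tau_of_gap hβ
      (by rw [code_concat, code_concat, expand_A_oneZeroOnes]) hA hM0) hcont

/-- The nodes at whose right endpoint `τ` jumps. -/
def Full (o : OuterCoding) (l : List Gen) : Prop :=
  (∃ k, o = OuterCoding.diff k ∧ l = []) ∨ ∃ l', l = l' ++ [Gen.M]

lemma encode_raise_zeroOnes (k : ℕ) :
    (OuterCoding.raise k).encode zeroOnes = fun _ => k + 1 := rfl

lemma encode_raise_oneZeroOnes (k : ℕ) :
    (OuterCoding.raise k).encode oneZeroOnes = (OuterCoding.diff k).encode oneZeros := by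
  funext i
  rcases i with _ | _ | i <;> rfl

lemma encode_diff_zeroOnes (k : ℕ) :
    (OuterCoding.diff k).encode zeroOnes = (OuterCoding.raise (k + 1)).encode zeroOneZeros := by
  funext i
  rcases i with _ | _ | i <;> rfl

lemma encode_diff_const_true (k : ℕ) :
    (OuterCoding.diff k).encode (Function.const ℕ true) =
      (OuterCoding.raise (k + 1)).encode oneZeros := by
  funext i
  cases i <;> rfl

lemma valSeq_encode_raise_zero_zeroOneZeros_lt_one (hβ : 1 < β) :
    valSeq β ((OuterCoding.raise 0).encode zeroOneZeros) < 1 := by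
  have tail : shift 1 ((OuterCoding.raise 0).encode zeroOneZeros) = fun _ => 0 := rfl
  have head : (OuterCoding.raise 0).encode zeroOneZeros 0 = 1 := rfl
  rw [valSeq_eq_head_add_tail hβ (c := (OuterCoding.raise 0).encode zeroOneZeros)
    fun _ => OuterCoding.digit_le_maxDigit _ _ _, tail, head,
    valSeq_const hβ, Nat.cast_zero, zero_div, add_zero, Nat.cast_one,
    div_lt_one (zero_lt_one.trans hβ)]
  exact hβ

lemma exists_one_lt_valSeq_encode_raise_zeroOnes (hβ : 1 < β) :
    ∃ k, 1 < valSeq β ((OuterCoding.raise k).encode zeroOnes) := by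
  obtain ⟨k, hk⟩ := exists_nat_gt (β - 1)
  refine ⟨k, ?_⟩
  rw [encode_raise_zeroOnes, valSeq_const hβ, one_lt_div (sub_pos.mpr hβ)]
  push_cast
  linarith

lemma exists_interior_nil (hβ : 1 < β) (hcont : ¬ ContinuousAt tau β)
    (h : ∀ k, valSeq β ((OuterCoding.diff k).encode zeroOnes) ≠ 1) : ∃ o, Interior β o [] := by
  classical
  have hex := exists_one_lt_valSeq_encode_raise_zeroOnes hβ
  obtain ⟨k, hk, hmin⟩ : ∃ k, 1 < valSeq β ((OuterCoding.raise k).encode zeroOnes) ∧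
      ∀ j < k, valSeq β ((OuterCoding.raise j).encode zeroOnes) ≤ 1 :=
    ⟨Nat.find hex, Nat.find_spec hex, fun j hj => not_lt.mp (Nat.find_min hex hj)⟩
  cases k with
  | zero => exact ⟨OuterCoding.raise 0, valSeq_encode_raise_zero_zeroOneZeros_lt_one hβ, hk⟩
  | succ j =>
    rcases lt_or_ge (valSeq β ((OuterCoding.diff j).encode zeroOneZeros)) 1 with hD | hD
    · rcases (h j).lt_or_gt with hD' | hD'
      · refine ⟨OuterCoding.raise (j + 1), ?_, hk⟩
        rwa [encode_diff_zeroOnes] at hD'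
      · exact ⟨OuterCoding.diff j, hD, hD'⟩
    · exact absurd (continuousAt_tau_of_gap (l := []) (l' := []) hβ (encode_raise_oneZeroOnes j)
        (hmin j j.lt_succ_self) hD) hcont

lemma continuousAt_tau_of_forall_full_ne (hβ : 1 < β)
    (h : ∀ o l, Full o l → valSeq β (code o l zeroOnes) ≠ 1) : ContinuousAt tau β := by
  by_contra hcont
  obtain ⟨o, root⟩ := exists_interior_nil hβ hcont fun k => h _ [] (Or.inl ⟨k, rfl, rfl⟩)
  have descend (n : ℕ) : ∃ l, l.length = n ∧ Interior β o l := by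
    induction n with
    | zero => exact ⟨[], rfl, root⟩
    | succ n ih =>
      obtain ⟨l, hl, interior⟩ := ih
      obtain ⟨a, ha⟩ := interior.exists_child hβ hcont (h o _ (Or.inr ⟨l, rfl⟩))
      exact ⟨l ++ [a], by rw [List.length_append, hl, List.length_singleton], ha⟩
  exact hcont (continuousAt_tau_of_interior hβ o fun n =>
    (descend n).imp fun l hl => ⟨hl.1.ge, hl.2⟩)

lemma tendsto_tau_right_of_full (hβ : 1 < β) (h : Full o l)
    (hb : valSeq β (code o l zeroOnes) = 1) :
    Tendsto tau (𝓝[>] β) (𝓝 (valSeq β (code o l (Function.const ℕ true)))) := by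
  obtain ⟨k, rfl, rfl⟩ | ⟨l', rfl⟩ := h
  · change valSeq β ((OuterCoding.diff k).encode zeroOnes) = 1 at hb
    change Tendsto tau _ (𝓝 (valSeq β ((OuterCoding.diff k).encode (Function.const ℕ true))))
    rw [encode_diff_zeroOnes] at hb
    rw [encode_diff_const_true]
    exact tendsto_tau_right (o := OuterCoding.raise (k + 1)) (l := []) hβ hb
  · rw [code_concat, expand_M_zeroOnes, ← code_concat] at hb
    rw [code_concat, expand_M_const, ← expand_B_oneZeros, ← code_concat]
    exact tendsto_tau_right hβ hb

end Bounds

/-! ### Words -/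

/-- The sequence `w` followed by `x`. -/
def prepend {α : Type*} (w : List α) (x : ℕ → α) : ℕ → α := w.foldr cons x

section Prepend

variable {α : Type*}

@[simp] lemma prepend_nil (x : ℕ → α) : prepend [] x = x := rfl

@[simp] lemma prepend_cons (a : α) (w : List α) (x : ℕ → α) :
    prepend (a :: w) x = cons a (prepend w x) := rfl

lemma prepend_append (u v : List α) (x : ℕ → α) :
    prepend (u ++ v) x = prepend u (prepend v x) :=
  List.foldr_append

lemma shift_length_prepend (w : List α) (x : ℕ → α) : shift w.length (prepend w x) = x := by
  induction w with
  | nil => rfl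
  | cons a w ih => rw [List.length_cons, prepend_cons, shift_succ_cons, ih]

end Prepend

lemma wordSeq_eq_prepend (w : List ℕ) (c : ℕ → ℕ) : wordSeq w c = prepend w c := by
  induction w with
  | nil => rfl
  | cons a w ih =>
    rw [prepend_cons, ← ih]
    funext i
    cases i <;> simp [wordSeq]

lemma eq_perSeq_of_eq_prepend {w : List ℕ} (hw : w ≠ []) {y : ℕ → ℕ} (h : y = prepend w y) :
    y = perSeq w := by
  rw [← wordSeq_eq_prepend] at h
  have length_pos : 0 < w.length := List.length_pos_iff.mpr hw
  funext i
  induction i using Nat.strong_induction_on with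
  | _ i ih =>
    rw [h, wordSeq]
    split
    · rw [perSeq, Nat.mod_eq_of_lt ‹_›]
    · rw [ih _ (by lia), perSeq, perSeq, ← Nat.mod_eq_sub_mod (by lia)]

lemma perSeq_rotate (w : List ℕ) (n : ℕ) : perSeq (w.rotate n) = shift n (perSeq w) := by
  rcases eq_or_ne w [] with rfl | hw
  · rfl
  funext i
  have mod_lt (j : ℕ) : j % w.length < w.length := Nat.mod_lt _ (List.length_pos_iff.mpr hw)
  rw [shift_apply, perSeq, perSeq, List.length_rotate,
    List.getD_eq_getElem _ _ (by simpa using mod_lt i), List.getD_eq_getElem _ _ (mod_lt _),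
    List.getElem_rotate]
  simp only [Nat.mod_add_mod]

lemma valWord_concat (β : ℝ) (w : List ℕ) (a : ℕ) :
    valWord β (w ++ [a]) = valWord β w + a / β ^ (w.length + 1) := by
  rw [valWord, List.length_append, List.length_singleton, Finset.sum_range_succ, valWord]
  congr 1
  · refine Finset.sum_congr rfl fun i hi => ?_
    rw [List.getD_append _ _ _ _ (Finset.mem_range.mp hi)]
  · simp

lemma valSeq_prepend {β : ℝ} (hβ : 1 < β) {D : ℕ} {w : List ℕ} {y : ℕ → ℕ}
    (h : ∀ i, prepend w y i ≤ D) :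
    valSeq β (prepend w y) = valWord β w + valSeq β y / β ^ w.length := by
  induction w using List.reverseRecOn generalizing y with
  | nil => simp [valWord]
  | append_singleton w a ih =>
    rw [prepend_append, prepend_cons, prepend_nil] at h ⊢
    have tail_le (i : ℕ) : cons a y i ≤ D := by
      rw [← shift_length_prepend w (cons a y)]
      exact h _
    rw [ih h, valWord_concat, valSeq_eq_head_add_tail hβ tail_le, shift_one_cons, cons_zero,
      List.length_append, List.length_singleton, pow_succ]
    field_simp
    ring

/-! ### The largest cyclic permutation -/

lemma le_of_perSeq_le {u v : List ℕ} (hlen : u.length = v.length)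
    (h : seqLe (perSeq u) (perSeq v)) : u ≤ v := by
  by_contra hlt
  rcases List.lt_iff_exists.mp (not_le.mp hlt) with ⟨-, hlt⟩ | ⟨i, hv, hu, agree, hlt⟩
  · exact hlt.ne hlen.symm
  have perSeq_eq {w : List ℕ} {j : ℕ} (hj : j < w.length) : perSeq w j = w[j] := by
    rw [perSeq, Nat.mod_eq_of_lt hj, List.getD_eq_getElem _ _ hj]
  have h' : seqLt (perSeq v) (perSeq u) := by
    refine ⟨i, fun j hj => ?_, ?_⟩
    · rw [perSeq_eq (hj.trans hv), perSeq_eq (hj.trans hu)]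
      exact agree j hj
    · rwa [perSeq_eq hv, perSeq_eq hu]
  rw [seqLe_iff_toLex_le] at h
  exact h.not_gt (seqLt_iff_toLex_lt.mp h')

lemma maxCyc_eq_rotate {w : List ℕ} {i : ℕ} (hi : i < w.length)
    (h : ∀ n, seqLe (shift n (perSeq w)) (perSeq (w.rotate i))) : maxCyc w = w.rotate i := by
  refine Option.some_injective _ ?_
  rw [maxCyc, ← List.max?_cons', List.max?_eq_some_iff]
  refine ⟨List.mem_cons_of_mem _ (List.mem_map_of_mem (List.mem_range.mpr hi)), fun u hu => ?_⟩
  rcases List.mem_cons.mp hu with rfl | hu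
  · exact not_lt.mp (List.not_lt_nil _)
  · obtain ⟨n, -, rfl⟩ := List.mem_map.mp hu
    refine le_of_perSeq_le (by simp only [List.length_rotate]) ?_
    rw [perSeq_rotate]
    exact h n

/-! ### Substitutions and codings of words -/

/-- The action of `expand g` on words. -/
def expandWord (g : Bool → Bool) (w : List Bool) : List Bool :=
  w.flatMap fun c => if g c then [c, !c] else [c]

/-- The action of `expandList l` on words. -/
def expandWordList (l : List Gen) (w : List Bool) : List Bool :=
  l.foldr (fun a y => expandWord a.flag y) w

/-- The coding of a word: one digit for each pair of consecutive letters. -/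
def OuterCoding.encodeWord (o : OuterCoding) (w : List Bool) : List ℕ :=
  List.zipWith o.digit w w.tail

section ExpandWord

variable (g : Bool → Bool) (l : List Gen)

lemma expandWord_append (u v : List Bool) :
    expandWord g (u ++ v) = expandWord g u ++ expandWord g v :=
  List.flatMap_append

variable {g} in
lemma expandWord_cons_of_true {c : Bool} (h : g c = true) (w : List Bool) :
    expandWord g (c :: w) = c :: (!c) :: expandWord g w := by
  simp [expandWord, h]

variable {g} in
lemma expandWord_cons_of_false {c : Bool} (h : g c = false) (w : List Bool) :
    expandWord g (c :: w) = c :: expandWord g w := by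
  simp [expandWord, h]

lemma expand_prepend (w : List Bool) (x : ℕ → Bool) :
    expand g (prepend w x) = prepend (expandWord g w) (expand g x) := by
  induction w with
  | nil => rfl
  | cons c w ih =>
    cases hg : g c
    · rw [prepend_cons, expand_cons_of_false hg, ih, expandWord_cons_of_false hg, prepend_cons]
    · rw [prepend_cons, expand_cons_of_true hg, ih, expandWord_cons_of_true hg, prepend_cons,
        prepend_cons]

@[simp] lemma expandWordList_nil (w : List Bool) : expandWordList [] w = w := rfl

@[simp] lemma expandWordList_cons (a : Gen) (w : List Bool) :
    expandWordList (a :: l) w = expandWord a.flag (expandWordList l w) := rfl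

lemma expandWordList_comp (l' : List Gen) (w : List Bool) :
    expandWordList (l ++ l') w = expandWordList l (expandWordList l' w) :=
  List.foldr_append

lemma expandWordList_append (u v : List Bool) :
    expandWordList l (u ++ v) = expandWordList l u ++ expandWordList l v := by
  induction l with
  | nil => rfl
  | cons a l ih => rw [expandWordList_cons, ih, expandWord_append]; rfl

lemma exists_expandWordList_cons (c : Bool) (w : List Bool) :
    ∃ t, expandWordList l (c :: w) = c :: t := by
  induction l with
  | nil => exact ⟨w, rfl⟩
  | cons a l ih =>
    obtain ⟨t, ht⟩ := ih
    rw [expandWordList_cons, ht]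
    cases h : a.flag c
    exacts [⟨_, expandWord_cons_of_false h t⟩, ⟨_, expandWord_cons_of_true h t⟩]

lemma expandList_prepend (w : List Bool) (x : ℕ → Bool) :
    expandList l (prepend w x) = prepend (expandWordList l w) (expandList l x) := by
  induction l with
  | nil => rfl
  | cons a l ih => rw [expandList_cons, ih, expand_prepend]; rfl

variable (o : OuterCoding)

lemma OuterCoding.encodeWord_append_cons (u : List Bool) (a : Bool) (v : List Bool) :
    o.encodeWord (u ++ a :: v) = o.encodeWord (u ++ [a]) ++ o.encodeWord (a :: v) := by
  induction u with
  | nil => simp [encodeWord]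
  | cons b u ih =>
    cases u with
    | nil => simp [encodeWord]
    | cons c u => simpa [encodeWord] using ih

lemma OuterCoding.encode_cons (a : Bool) (y : ℕ → Bool) :
    o.encode (cons a y) = cons (o.digit a (y 0)) (o.encode y) := by
  funext i
  cases i <;> rfl

lemma OuterCoding.encode_prepend (w : List Bool) (x : ℕ → Bool) :
    o.encode (prepend w x) = prepend (o.encodeWord (w ++ [x 0])) (o.encode x) := by
  induction w with
  | nil => rfl
  | cons a w ih =>
    rw [prepend_cons, o.encode_cons, ih]
    cases w <;> rfl

lemma code_prepend (w : List Bool) (x : ℕ → Bool) :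
    code o l (prepend w x) =
      prepend (o.encodeWord (expandWordList l w ++ [x 0])) (code o l x) := by
  rw [code, expandList_prepend, o.encode_prepend, expandList_apply_zero, code]

end ExpandWord

/-! ### The words attached to a node -/

/-- The digits that the letter `p` followed by `c` contributes to a coded sequence: at a node whose
word is `S`, these are `S = block o l true true`, `S⁻ = block o l true false`,
`L(S) = block o l false false` and `L(S)⁺ = block o l false true`. -/
def block (o : OuterCoding) (l : List Gen) (p c : Bool) : List ℕ :=
  o.encodeWord (expandWordList l [p] ++ [c])

section Block

variable (o : OuterCoding) (l : List Gen)

lemma exists_block_eq (p : Bool) : ∃ t q, ∀ c, block o l p c = t ++ [o.digit q c] := by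
  obtain ⟨t, ht⟩ := exists_expandWordList_cons l p []
  obtain ⟨u, q, hu⟩ := (expandWordList l [p]).eq_nil_or_concat.resolve_left (by simp [ht])
  refine ⟨o.encodeWord (u ++ [q]), q, fun c => ?_⟩
  rw [block, hu, List.concat_eq_append, List.append_assoc, List.singleton_append,
    o.encodeWord_append_cons]
  rfl

lemma wplus_block (p : Bool) : wplus (block o l p false) = block o l p true := by
  obtain ⟨t, q, h⟩ := exists_block_eq o l p
  simp [wplus, h, o.digit_true]

lemma wminus_block (p : Bool) : wminus (block o l p true) = block o l p false := by
  obtain ⟨t, q, h⟩ := exists_block_eq o l p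
  simp [wminus, h, o.digit_true]

lemma block_ne_nil (p c : Bool) : block o l p c ≠ [] := by
  obtain ⟨t, q, h⟩ := exists_block_eq o l p
  simp [h]

lemma code_cons (p : Bool) (x : ℕ → Bool) :
    code o l (cons p x) = prepend (block o l p (x 0)) (code o l x) :=
  code_prepend l o [p] x

lemma code_const_eq_prepend (c : Bool) :
    code o l (Function.const ℕ c) =
      prepend (block o l c c) (code o l (Function.const ℕ c)) := by
  conv_lhs => rw [const_eq_cons, code_cons]
  rfl

lemma perSeq_block (c : Bool) : perSeq (block o l c c) = code o l (Function.const ℕ c) :=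
  (eq_perSeq_of_eq_prepend (block_ne_nil o l c c) (code_const_eq_prepend o l c)).symm

lemma wordSeq_block :
    wordSeq (block o l false true) (perSeq (block o l true true)) = code o l zeroOnes := by
  rw [wordSeq_eq_prepend, perSeq_block, zeroOnes, code_cons]
  rfl

variable {o l} in
lemma valSeq_code_oneZeroOnes {β : ℝ} (hβ : 1 < β) (hb : valSeq β (code o l zeroOnes) = 1) :
    valSeq β (code o l oneZeroOnes) = valWord β (block o l true true) := by
  have code_eq : code o l oneZeroOnes = prepend (block o l true false) (code o l zeroOnes) :=
    code_cons o l true zeroOnes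
  obtain ⟨t, q, h⟩ := exists_block_eq o l true
  rw [code_eq, valSeq_prepend hβ (code_eq ▸ code_le_maxDigit o l oneZeroOnes), hb, h, h,
    valWord_concat, valWord_concat, o.digit_true, List.length_append, List.length_singleton,
    Nat.cast_succ]
  ring

lemma valWord_block_lt {β : ℝ} (hβ : 1 < β) :
    valWord β (block o l true true) < valSeq β (code o l (Function.const ℕ true)) := by
  have digits_le := code_le_maxDigit o l (Function.const ℕ true)
  obtain ⟨i, hi⟩ := (frequently_code_ne_zero o l (x := Function.const ℕ true)
    (Eventually.of_forall fun _ => rfl).frequently).exists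
  have value_pos := valSeq_pos hβ digits_le ⟨i, hi⟩
  have value_eq : valSeq β (code o l (Function.const ℕ true)) = valWord β (block o l true true) +
      valSeq β (code o l (Function.const ℕ true)) / β ^ (block o l true true).length := by
    conv_lhs => rw [code_const_eq_prepend, valSeq_prepend hβ
      (code_const_eq_prepend o l true ▸ digits_le)]
  rw [value_eq]
  exact lt_add_of_pos_right _ (by positivity)

lemma block_concat_M (p : Bool) :
    block o (l ++ [Gen.M]) p p = block o l p (!p) ++ block o l (!p) p := by
  obtain ⟨t, ht⟩ := exists_expandWordList_cons l (!p) []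
  have expand_letter : expandWordList [Gen.M] [p] = [p] ++ [!p] := rfl
  rw [block, expandWordList_comp, expand_letter, expandWordList_append, block, block, ht,
    List.append_assoc, List.cons_append, o.encodeWord_append_cons]

lemma exists_shift_alternating (n : ℕ) (c : Bool) :
    ∃ d, shift n (alternating c) = alternating d := by
  induction n with
  | zero => exact ⟨c, rfl⟩
  | succ n ih =>
    obtain ⟨d, hd⟩ := ih
    exact ⟨!d, by rw [add_comm, ← shift_shift, hd, alternating_eq_cons, shift_one_cons]⟩

lemma shift_perSeq_block_concat_M_le (n : ℕ) :
    seqLe (shift n (perSeq (block o (l ++ [Gen.M]) true true)))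
      (perSeq (block o (l ++ [Gen.M]) false false)) := by
  simp only [perSeq_block, code_concat, expand_M_const]
  refine TailsBetween.shift_code_le o l (K := alternating) (fun c => ⟨rfl, rfl⟩) (fun n c => ?_) n
  obtain ⟨d, hd⟩ := exists_shift_alternating n true
  rw [hd, alternating_eq_cons c, shift_one_cons]
  rcases Bool.eq_or_eq_not d c with rfl | rfl
  · exact Or.inr (lexLt_of_head rfl rfl)
  · exact Or.inl rfl

lemma maxCyc_block_concat_M :
    maxCyc (block o (l ++ [Gen.M]) true true) = block o (l ++ [Gen.M]) false false := by
  have rotate_eq : (block o (l ++ [Gen.M]) true true).rotate (block o l true false).length =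
      block o (l ++ [Gen.M]) false false := by
    rw [block_concat_M, block_concat_M, Bool.not_true, Bool.not_false,
      List.rotate_append_length_eq]
  rw [← rotate_eq]
  refine maxCyc_eq_rotate ?_ fun n => ?_
  · rw [block_concat_M, Bool.not_true, List.length_append]
    exact Nat.lt_add_of_pos_right (List.length_pos_iff.mpr (block_ne_nil o l false true))
  · rw [rotate_eq]
    exact shift_perSeq_block_concat_M_le o l n

variable {o l}

lemma Full.maxCyc_block (h : Full o l) :
    maxCyc (block o l true true) = block o l false false := by
  rcases h with ⟨k, rfl, rfl⟩ | ⟨l, rfl⟩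
  · refine maxCyc_eq_rotate (i := 0) Nat.one_pos fun n => Or.inl ?_
    rw [← perSeq_rotate]
    simp [block, OuterCoding.encodeWord]
  · exact maxCyc_block_concat_M o l

end Block

/-! ### Farey words -/

/-- The binary Farey word reached by descending along `l` in the Farey tree. -/
def fareyWord (l : List Gen) : List ℕ :=
  ((expandWordList l [true, false]).tail ++ [true]).map Bool.toNat

/-- The morphism `0 ↦ 0`, `1 ↦ 01`, which maps the Farey tree onto its left half. -/
def fareyLeft (w : List ℕ) : List ℕ := w.flatMap fun d => if d = 0 then [0] else [0, 1]

/-- The morphism `0 ↦ 01`, `1 ↦ 1`, which maps the Farey tree onto its right half. -/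
def fareyRight (w : List ℕ) : List ℕ := w.flatMap fun d => if d = 0 then [0, 1] else [1]

lemma fareyLeft_append (u v : List ℕ) : fareyLeft (u ++ v) = fareyLeft u ++ fareyLeft v :=
  List.flatMap_append

lemma fareyRight_append (u v : List ℕ) : fareyRight (u ++ v) = fareyRight u ++ fareyRight v :=
  List.flatMap_append

section FareyInsert

variable (X Y : List (List ℕ)) (w : List ℕ)

lemma fareyInsert_map {m : List ℕ → List ℕ} (hm : ∀ u v, m (u ++ v) = m u ++ m v) :
    fareyInsert (X.map m) = (fareyInsert X).map m := by
  induction X with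
  | nil => rfl
  | cons a X ih =>
    cases X with
    | nil => rfl
    | cons b X =>
      simp only [List.map_cons] at ih
      simp [fareyInsert, ih, hm]

lemma exists_fareyInsert_cons : ∃ Z, fareyInsert (w :: X) = w :: Z := by
  cases X with
  | nil => exact ⟨[], rfl⟩
  | cons b X => exact ⟨_, rfl⟩

lemma exists_fareyInsert_concat : ∃ Z, fareyInsert (X ++ [w]) = Z ++ [w] := by
  induction X with
  | nil => exact ⟨[], rfl⟩
  | cons b X ih =>
    obtain ⟨Z, hZ⟩ := ih
    cases X with
    | nil => exact ⟨[b, b ++ w], rfl⟩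
    | cons c X => exact ⟨b :: (b ++ c) :: Z, by simpa [fareyInsert] using hZ⟩

lemma fareyInsert_append :
    fareyInsert (X ++ w :: Y) = fareyInsert (X ++ [w]) ++ (fareyInsert (w :: Y)).tail := by
  induction X with
  | nil =>
    obtain ⟨Z, hZ⟩ := exists_fareyInsert_cons Y w
    simp [hZ, fareyInsert]
  | cons b X ih =>
    cases X with
    | nil => simpa [fareyInsert] using ih
    | cons c X => simpa [fareyInsert] using ih

end FareyInsert

lemma exists_fareyLevel_eq_cons (n : ℕ) : ∃ Y, fareyLevel n = [0] :: Y := by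
  induction n with
  | zero => exact ⟨_, rfl⟩
  | succ n ih =>
    obtain ⟨Y, hY⟩ := ih
    rw [fareyLevel, hY]
    exact exists_fareyInsert_cons _ _

lemma exists_fareyLevel_eq_concat (n : ℕ) : ∃ X, fareyLevel n = X ++ [[1]] := by
  induction n with
  | zero => exact ⟨[[0]], rfl⟩
  | succ n ih =>
    obtain ⟨Y, hY⟩ := ih
    rw [fareyLevel, hY]
    exact exists_fareyInsert_concat _ _

lemma fareyLevel_succ (n : ℕ) :
    fareyLevel (n + 1) =
      (fareyLevel n).map fareyLeft ++ ((fareyLevel n).map fareyRight).tail := by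
  induction n with
  | zero => rfl
  | succ n ih =>
    obtain ⟨X, hX⟩ := exists_fareyLevel_eq_concat n
    obtain ⟨Y, hY⟩ := exists_fareyLevel_eq_cons n
    have left_eq : (fareyLevel n).map fareyLeft = X.map fareyLeft ++ [[0, 1]] := by
      simp [hX, fareyLeft]
    have right_eq : (fareyLevel n).map fareyRight = [0, 1] :: Y.map fareyRight := by
      simp [hY, fareyRight]
    calc fareyLevel (n + 2)
      _ = fareyInsert ((fareyLevel n).map fareyLeft ++ ((fareyLevel n).map fareyRight).tail) :=
        congrArg fareyInsert ih
      _ = fareyInsert ((fareyLevel n).map fareyLeft) ++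
          (fareyInsert ((fareyLevel n).map fareyRight)).tail := by
        rw [left_eq, right_eq, List.tail_cons, List.append_assoc, List.singleton_append,
          fareyInsert_append]
      _ = (fareyLevel (n + 1)).map fareyLeft ++ ((fareyLevel (n + 1)).map fareyRight).tail := by
        rw [fareyInsert_map _ fareyLeft_append, fareyInsert_map _ fareyRight_append]
        rfl

lemma mem_fareyLevel_succ {n : ℕ} {w : List ℕ} :
    w ∈ fareyLevel (n + 1) ↔ ∃ v ∈ fareyLevel n, w = fareyLeft v ∨ w = fareyRight v := by
  rw [fareyLevel_succ, List.mem_append]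
  constructor
  · rintro (h | h)
    · obtain ⟨v, hv, rfl⟩ := List.mem_map.mp h
      exact ⟨v, hv, Or.inl rfl⟩
    · obtain ⟨v, hv, rfl⟩ := List.mem_map.mp (List.mem_of_mem_tail h)
      exact ⟨v, hv, Or.inr rfl⟩
  · rintro ⟨v, hv, rfl | rfl⟩
    · exact Or.inl (List.mem_map_of_mem hv)
    · obtain ⟨X, hX⟩ := exists_fareyLevel_eq_concat n
      obtain ⟨Y, hY⟩ := exists_fareyLevel_eq_cons n
      rw [hY, List.mem_cons] at hv
      rcases hv with rfl | hv
      · exact Or.inl (by simp [hX, fareyLeft, fareyRight])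
      · exact Or.inr (by rw [hY]; exact List.mem_map_of_mem hv)

lemma exists_fareyWord_eq (l : List Gen) :
    ∃ t, expandWordList l [true, false] = true :: false :: t ∧
      fareyWord l = (false :: t ++ [true]).map Bool.toNat := by
  suffices h : ∃ t, expandWordList l [true, false] = true :: false :: t by
    obtain ⟨t, ht⟩ := h
    exact ⟨t, ht, by rw [fareyWord, ht]; rfl⟩
  induction l with
  | nil => exact ⟨[], rfl⟩
  | cons a l ih =>
    obtain ⟨t, ht⟩ := ih
    rw [expandWordList_cons, ht]
    cases a
    exacts [⟨_, rfl⟩, ⟨_, rfl⟩, ⟨_, rfl⟩]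

lemma fareyRight_map_toNat (ρ : List Bool) :
    fareyRight (ρ.map Bool.toNat) = (expandWord Gen.B.flag ρ).map Bool.toNat := by
  rw [fareyRight, expandWord, List.flatMap_map, List.map_flatMap]
  exact congrArg (ρ.flatMap ·) (funext fun c => by cases c <;> rfl)

-- `0` conjugates the substitution `A` (`0 ↦ 0`, `1 ↦ 10`) to `0 ↦ 0`, `1 ↦ 01`.
lemma fareyLeft_map_toNat_concat (ρ : List Bool) :
    fareyLeft (ρ.map Bool.toNat) ++ [0] = 0 :: (expandWord Gen.A.flag ρ).map Bool.toNat := by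
  induction ρ with
  | nil => rfl
  | cons c ρ ih =>
    rw [List.map_cons, fareyLeft, List.flatMap_cons, ← fareyLeft, List.append_assoc, ih]
    cases c <;> rfl

lemma fareyWord_cons_A (l : List Gen) : fareyWord (Gen.A :: l) = fareyLeft (fareyWord l) := by
  obtain ⟨t, ht, hw⟩ := exists_fareyWord_eq l
  calc fareyWord (Gen.A :: l)
    _ = 0 :: (expandWord Gen.A.flag (false :: t)).map Bool.toNat ++ [1] := by
      rw [fareyWord, expandWordList_cons, ht, List.map_append]
      rfl
    _ = fareyLeft ((false :: t).map Bool.toNat) ++ [0, 1] := by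
      rw [← fareyLeft_map_toNat_concat, List.append_assoc]
      rfl
    _ = fareyLeft (fareyWord l) := by
      rw [hw, List.map_append, fareyLeft_append]
      rfl

lemma fareyWord_cons_B (l : List Gen) : fareyWord (Gen.B :: l) = fareyRight (fareyWord l) := by
  obtain ⟨t, ht, hw⟩ := exists_fareyWord_eq l
  rw [hw, fareyRight_map_toNat, expandWord_append, fareyWord, expandWordList_cons, ht]
  rfl

lemma fareyWord_mem_FareySet {l : List Gen} (hl : Gen.M ∉ l) : fareyWord l ∈ FareySet := by
  refine ⟨?_, ?_⟩
  · induction l with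
    | nil => exact ⟨1, by simp [fareyLevel, fareyInsert, fareyWord]⟩
    | cons a l ih =>
      obtain ⟨n, hn⟩ := ih fun h => hl (List.mem_cons_of_mem _ h)
      refine ⟨n + 1, mem_fareyLevel_succ.mpr ⟨_, hn, ?_⟩⟩
      cases a with
      | A => exact Or.inl (fareyWord_cons_A l)
      | B => exact Or.inr (fareyWord_cons_B l)
      | M => exact absurd List.mem_cons_self hl
  · obtain ⟨t, -, hw⟩ := exists_fareyWord_eq l
    simp [hw]

lemma exists_eq_fareyWord_of_mem_FareySet {w : List ℕ} (hw : w ∈ FareySet) :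
    ∃ l, w = fareyWord l := by
  obtain ⟨⟨n, hn⟩, ne_zero, ne_one⟩ := hw
  induction n generalizing w with
  | zero => simp [fareyLevel, ne_zero, ne_one] at hn
  | succ n ih =>
    obtain ⟨v, hv, hw⟩ := mem_fareyLevel_succ.mp hn
    by_cases h0 : v = [0]
    · rcases hw with rfl | rfl <;> subst h0
      exacts [absurd rfl ne_zero, ⟨[], rfl⟩]
    by_cases h1 : v = [1]
    · rcases hw with rfl | rfl <;> subst h1
      exacts [⟨[], rfl⟩, absurd rfl ne_one]
    obtain ⟨l, rfl⟩ := ih hv h0 h1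
    rcases hw with rfl | rfl
    exacts [⟨_, (fareyWord_cons_A l).symm⟩, ⟨_, (fareyWord_cons_B l).symm⟩]

/-! ### The words of `LambdaExt` -/

section Subst

variable {o : OuterCoding} {l : List Gen}

lemma Full.phiBlock_block (h : Full o l) (p c : Bool) :
    phiBlock (block o l true true) p.toNat c.toNat = block o l p c := by
  cases p <;> cases c <;> simp [phiBlock, h.maxCyc_block, wplus_block, wminus_block]

lemma Full.phiAux_block (h : Full o l) (w : List Bool) (p c : Bool) :
    phiAux (block o l true true) p.toNat ((w ++ [c]).map Bool.toNat) =
      o.encodeWord (expandWordList l (p :: w) ++ [c]) := by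
  induction w generalizing p with
  | nil =>
    rw [List.nil_append, List.map_singleton, phiAux, phiAux, List.append_nil,
      h.phiBlock_block, block]
  | cons d w ih =>
    obtain ⟨t, ht⟩ := exists_expandWordList_cons l d w
    have expand_eq : expandWordList l (p :: d :: w) = expandWordList l [p] ++ d :: t := by
      rw [← ht, ← expandWordList_append]
      rfl
    rw [List.cons_append, List.map_cons, phiAux, h.phiBlock_block, ih, expand_eq, ht,
      List.append_assoc, List.cons_append, o.encodeWord_append_cons, block]

lemma block_concat_M_true (o : OuterCoding) (l l' : List Gen) :
    block o (l ++ l' ++ [Gen.M]) true true =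
      o.encodeWord (expandWordList l (expandWordList l' [true, false]) ++ [true]) := by
  rw [block, expandWordList_comp, expandWordList_comp]
  rfl

lemma Full.subst_block (h : Full o l) (l' : List Gen) :
    subst (block o l true true) (fareyWord l') = block o (l ++ l' ++ [Gen.M]) true true := by
  obtain ⟨t, ht, hw⟩ := exists_fareyWord_eq l'
  rw [hw, block_concat_M_true, ht]
  exact h.phiAux_block (false :: t) true true

lemma theta_iterate (k : ℕ) (w : List ℕ) : theta^[k] w = w.map (k + ·) := by
  induction k with
  | zero => simp
  | succ k ih =>
    rw [Function.iterate_succ_apply', ih, theta, List.map_map]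
    exact List.map_congr_left fun a _ => add_right_comm k a 1

lemma encodeWord_raise_cons (k : ℕ) (a : Bool) (w : List Bool) :
    (OuterCoding.raise k).encodeWord (a :: w) = theta^[k] (w.map Bool.toNat) := by
  rw [theta_iterate]
  induction w generalizing a with
  | nil => rfl
  | cons b w ih => exact congrArg (_ :: ·) (ih b)

lemma block_raise (k : ℕ) (l : List Gen) :
    block (OuterCoding.raise k) (l ++ [Gen.M]) true true = theta^[k] (fareyWord l) := by
  obtain ⟨t, ht, hw⟩ := exists_fareyWord_eq l
  rw [hw, ← List.nil_append l, block_concat_M_true, ht]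
  exact encodeWord_raise_cons k true _

lemma block_diff (k : ℕ) : block (OuterCoding.diff k) [] true true = theta^[k] [1] := by
  rw [theta_iterate]
  rfl

lemma mem_LambdaExt {w : List ℕ} :
    w ∈ LambdaExt ↔ ∃ s ∈ FareyExt, ∃ rs : List (List ℕ), (∀ r ∈ rs, r ∈ FareySet) ∧
      w = rs.foldl subst s := by
  simp only [LambdaExt, LambdaE, mem_iUnion, mem_Ici, mem_ofPred_eq, exists_prop]
  constructor
  · rintro ⟨m, -, s, hs, rs, -, h⟩
    exact ⟨s, hs, rs, h⟩
  · rintro ⟨s, hs, rs, h⟩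
    exact ⟨rs.length + 1, by simp, s, hs, rs, by simp, h⟩

lemma mem_LambdaExt_of_mem_FareyExt {s : List ℕ} (hs : s ∈ FareyExt) : s ∈ LambdaExt :=
  mem_LambdaExt.mpr ⟨s, hs, [], by simp, rfl⟩

lemma subst_mem_LambdaExt {S r : List ℕ} (hS : S ∈ LambdaExt) (hr : r ∈ FareySet) :
    subst S r ∈ LambdaExt := by
  obtain ⟨s, hs, rs, h, rfl⟩ := mem_LambdaExt.mp hS
  refine mem_LambdaExt.mpr ⟨s, hs, rs ++ [r], fun q hq => ?_, by simp⟩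
  rcases List.mem_append.mp hq with hq | hq
  · exact h q hq
  · rwa [List.mem_singleton.mp hq]

lemma block_diff_mem_LambdaExt (k : ℕ) :
    block (OuterCoding.diff k) [] true true ∈ LambdaExt :=
  mem_LambdaExt_of_mem_FareyExt ⟨[1], Or.inr rfl, k, block_diff k⟩

lemma Full.block_append_mem_LambdaExt {l' : List Gen} (hF : Full o l)
    (h : block o l true true ∈ LambdaExt) (hl' : Gen.M ∉ l') :
    block o (l ++ l' ++ [Gen.M]) true true ∈ LambdaExt := by
  rw [← hF.subst_block]
  exact subst_mem_LambdaExt h (fareyWord_mem_FareySet hl')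

-- The factors of `S` are read off by cutting the list of generators after every `M`; `l'` collects
-- the generators following the last cut.
lemma block_append_concat_M_mem_LambdaExt (o : OuterCoding) (l : List Gen) {l' : List Gen}
    (hl' : Gen.M ∉ l') : block o (l ++ l' ++ [Gen.M]) true true ∈ LambdaExt := by
  induction l using List.reverseRecOn generalizing l' with
  | nil =>
    cases o with
    | raise k =>
      exact mem_LambdaExt_of_mem_FareyExt
        ⟨_, Or.inl (fareyWord_mem_FareySet hl'), k, block_raise k l'⟩
    | diff k =>
      exact Full.block_append_mem_LambdaExt (Or.inl ⟨k, rfl, rfl⟩) (block_diff_mem_LambdaExt k) hl'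
  | append_singleton l a ih =>
    by_cases ha : Gen.M = a
    · subst ha
      refine Full.block_append_mem_LambdaExt (Or.inr ⟨l, rfl⟩) ?_ hl'
      simpa using ih (l' := []) List.not_mem_nil
    · simpa using ih (l' := a :: l') (fun h => (List.mem_cons.mp h).elim ha hl')

lemma Full.block_mem_LambdaExt (h : Full o l) : block o l true true ∈ LambdaExt := by
  rcases h with ⟨k, rfl, rfl⟩ | ⟨l, rfl⟩
  · exact block_diff_mem_LambdaExt k
  · simpa using block_append_concat_M_mem_LambdaExt o l (l' := []) List.not_mem_nil

lemma exists_block_of_mem_FareyExt {s : List ℕ} (hs : s ∈ FareyExt) :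
    ∃ o l, Full o l ∧ s = block o l true true := by
  obtain ⟨v, hv | rfl, k, rfl⟩ := hs
  · obtain ⟨l, rfl⟩ := exists_eq_fareyWord_of_mem_FareySet hv
    exact ⟨OuterCoding.raise k, l ++ [Gen.M], Or.inr ⟨l, rfl⟩, (block_raise k l).symm⟩
  · exact ⟨OuterCoding.diff k, [], Or.inl ⟨k, rfl, rfl⟩, (block_diff k).symm⟩

lemma exists_block_of_mem_LambdaExt {S : List ℕ} (hS : S ∈ LambdaExt) :
    ∃ o l, Full o l ∧ S = block o l true true := by
  obtain ⟨s, hs, rs, hrs, rfl⟩ := mem_LambdaExt.mp hS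
  clear hS
  induction rs using List.reverseRecOn with
  | nil => exact exists_block_of_mem_FareyExt hs
  | append_singleton rs r ih =>
    obtain ⟨o, l, hF, h⟩ := ih fun q hq => hrs q (by simp [hq])
    obtain ⟨l', rfl⟩ := exists_eq_fareyWord_of_mem_FareySet (hrs r (by simp))
    exact ⟨o, l ++ l' ++ [Gen.M], Or.inr ⟨l ++ l', rfl⟩, by
      rw [List.foldl_concat, h, hF.subst_block]⟩

/-! ### The right end points -/

lemma Full.betaR_block_spec (h : Full o l) :
    1 < betaR (block o l true true) ∧
      valSeq (betaR (block o l true true)) (code o l zeroOnes) = 1 := by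
  have seq_eq : wordSeq (wplus (maxCyc (block o l true true))) (perSeq (block o l true true)) =
      code o l zeroOnes := by rw [h.maxCyc_block, wplus_block, wordSeq_block]
  rw [betaR, seq_eq]
  exact Classical.epsilon_spec (p := fun β : ℝ => 1 < β ∧ valSeq β (code o l zeroOnes) = 1)
    (exists_base_valSeq_eq_one (code_le_maxDigit o l _)
      (frequently_code_ne_zero o l frequently_zeroOnes_eq_true))

lemma Full.eq_betaR_block (h : Full o l) {β : ℝ} (hβ : 1 < β)
    (hb : valSeq β (code o l zeroOnes) = 1) : β = betaR (block o l true true) := by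
  obtain ⟨one_lt, value_eq⟩ := h.betaR_block_spec
  have digits_le := code_le_maxDigit o l zeroOnes
  have exists_ne := (frequently_code_ne_zero o l frequently_zeroOnes_eq_true).exists
  rcases lt_trichotomy β (betaR (block o l true true)) with hlt | heq | hlt
  · exact absurd (value_eq.trans hb.symm)
      (valSeq_lt_of_base_lt hβ hlt digits_le exists_ne).ne
  · exact heq
  · exact absurd (hb.trans value_eq.symm)
      (valSeq_lt_of_base_lt one_lt hlt digits_le exists_ne).ne

end Subst

end BetaTau

open BetaTau in
/-- `τ` is continuous at every point of `(1,∞) ∖ {β_r^S : S ∈ Λ_e}`,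
while at each `β_r^S`, `S ∈ Λ_e`, it has an upward jump:
`lim_{β↘β_r^S} τ(β) = (S^∞)_{β_r^S} > (S 0^∞)_{β_r^S} = τ(β_r^S)`. -/
theorem tau_continuity_and_jumps :
    (∀ β₀ : ℝ, 1 < β₀ → (¬ ∃ S ∈ LambdaExt, β₀ = betaR S) →
      ContinuousWithinAt tau (Set.Ioi 1) β₀) ∧
    (∀ S ∈ LambdaExt,
      Filter.Tendsto tau (𝓝[>] betaR S) (𝓝 (valSeq (betaR S) (perSeq S))) ∧
      valWord (betaR S) S < valSeq (betaR S) (perSeq S) ∧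
      tau (betaR S) = valWord (betaR S) S) := by
  refine ⟨fun β hβ h => (continuousAt_tau_of_forall_full_ne hβ fun o l hF hb =>
    h ⟨_, hF.block_mem_LambdaExt, hF.eq_betaR_block hβ hb⟩).continuousWithinAt, fun S hS => ?_⟩
  obtain ⟨o, l, hF, rfl⟩ := exists_block_of_mem_LambdaExt hS
  obtain ⟨one_lt, value_eq⟩ := hF.betaR_block_spec
  rw [perSeq_block]
  exact ⟨tendsto_tau_right_of_full one_lt hF value_eq, valWord_block_lt o l one_lt,
    (tau_eq_valSeq_code_oneZeroOnes one_lt value_eq).trans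
      (valSeq_code_oneZeroOnes one_lt value_eq)⟩
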